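/- HyperCTL* satisfiability is Σ²₁-complete: under a fixed computable injective encoding of HyperCTL* sentences as natural numbers, the set of codes of satisfiable HyperCTL* sentences is Σ²₁, and every Σ²₁ set many-one reduces to it via a total computable function. -/

import Mathlib

/-! ### Transition systems and HyperCTL* -/

/-- A transition system over `AP`: every vertex has an outgoing edge. -/
structure TS (AP : Type) : Type 1 where
  V : Type
  E : V → V → Prop
  vI : V
  lab : V → Set AP
  succ : ∀ v, ∃ w, E v w

/-- A path through a transition system. -/
def TS.IsPath {AP : Type} (S : TS AP) (ρ : ℕ → S.V) : Prop :=
  ∀ i, S.E (ρ i) (ρ (i + 1))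

/-- HyperCTL* formulas; path variables are natural numbers. -/
inductive CTL (AP : Type) : Type where
  | atom : AP → ℕ → CTL AP
  | neg  : CTL AP → CTL AP
  | disj : CTL AP → CTL AP → CTL AP
  | next : CTL AP → CTL AP
  | untl : CTL AP → CTL AP → CTL AP
  | ex   : ℕ → CTL AP → CTL AP
  | all  : ℕ → CTL AP → CTL AP

/-- Semantics of HyperCTL* w.r.t. a path assignment `As` and the variable `r`
most recently added to the assignment: quantified paths start at the first
vertex of the most recently assigned path. -/
def CTL.sat {AP : Type} (S : TS AP) : CTL AP → (ℕ → ℕ → S.V) → ℕ → Prop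
  | .atom a x, As, _ => a ∈ S.lab (As x 0)
  | .neg φ, As, r => ¬ φ.sat S As r
  | .disj φ ψ, As, r => φ.sat S As r ∨ ψ.sat S As r
  | .next φ, As, r => φ.sat S (fun x i => As x (i + 1)) r
  | .untl φ ψ, As, r =>
      ∃ j, ψ.sat S (fun x i => As x (i + j)) r ∧
        ∀ j' < j, φ.sat S (fun x i => As x (i + j')) r
  | .ex x φ, As, r => ∃ ρ : ℕ → S.V, S.IsPath ρ ∧ ρ 0 = As r 0 ∧
      φ.sat S (Function.update As x ρ) x
  | .all x φ, As, r => ∀ ρ : ℕ → S.V, S.IsPath ρ → ρ 0 = As r 0 →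
      φ.sat S (Function.update As x ρ) x

def CTL.freeVars {AP : Type} : CTL AP → Set ℕ
  | .atom _ x => {x}
  | .neg φ => φ.freeVars
  | .disj φ ψ => φ.freeVars ∪ ψ.freeVars
  | .next φ => φ.freeVars
  | .untl φ ψ => φ.freeVars ∪ ψ.freeVars
  | .ex x φ => φ.freeVars \ {x}
  | .all x φ => φ.freeVars \ {x}

/-- Every temporal operator occurs in the scope of a path quantifier. -/
def CTL.guarded {AP : Type} : CTL AP → Prop
  | .atom _ _ => True
  | .neg φ => φ.guarded
  | .disj φ ψ => φ.guarded ∧ ψ.guarded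
  | .next _ => False
  | .untl _ _ => False
  | .ex _ _ => True
  | .all _ _ => True

/-- A HyperCTL* sentence: no free variables and all temporal operators occur
under a path quantifier. -/
def CTL.IsSentence {AP : Type} (φ : CTL AP) : Prop := φ.freeVars = ∅ ∧ φ.guarded

/-- `S ⊨ φ`: satisfaction w.r.t. the empty assignment, i.e. quantification of
the first path starts at the initial vertex (for sentences the choice of the
initial dummy path is irrelevant). -/
def CModels {AP : Type} (S : TS AP) (φ : CTL AP) : Prop :=
  ∀ ρ : ℕ → S.V, S.IsPath ρ → ρ 0 = S.vI → φ.sat S (fun _ => ρ) 0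

/-- A fixed computable injective encoding of HyperCTL* formulas. -/
def CTL.code : CTL ℕ → ℕ
  | .atom a x => Nat.pair 0 (Nat.pair a x)
  | .neg φ => Nat.pair 1 φ.code
  | .disj φ ψ => Nat.pair 2 (Nat.pair φ.code ψ.code)
  | .next φ => Nat.pair 3 φ.code
  | .untl φ ψ => Nat.pair 4 (Nat.pair φ.code ψ.code)
  | .ex x φ => Nat.pair 5 (Nat.pair x φ.code)
  | .all x φ => Nat.pair 6 (Nat.pair x φ.code)

/-- `A` many-one reduces to `B` via a total computable function. -/
def ManyOneRed (A B : Set ℕ) : Prop :=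
  ∃ f : ℕ → ℕ, Computable f ∧ ∀ x, x ∈ A ↔ f x ∈ B

/-! ### Σ²₁ sets -/

/-- Terms of arithmetic with number variables, applications of type-1 function
variables, and applications of type-2 variables to type-1 variables. -/
inductive T2Term : Type where
  | var : ℕ → T2Term
  | zero : T2Term
  | one : T2Term
  | add : T2Term → T2Term → T2Term
  | mul : T2Term → T2Term → T2Term
  | app1 : ℕ → T2Term → T2Term
  | app2 : ℕ → ℕ → T2Term

def T2Term.eval : T2Term → (ℕ → ℕ) → (ℕ → ℕ → ℕ) → (ℕ → (ℕ → ℕ) → ℕ) → ℕ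
  | .var x, v, _, _ => v x
  | .zero, _, _, _ => 0
  | .one, _, _, _ => 1
  | .add s t, v, g, G => s.eval v g G + t.eval v g G
  | .mul s t, v, g, G => s.eval v g G * t.eval v g G
  | .app1 f t, v, g, G => g f (t.eval v g G)
  | .app2 F f, v, g, _G => _G F (g f)

/-- Arithmetic formulas with arbitrary quantification over type-0 objects
(naturals) and type-1 objects (functions ℕ → ℕ); type-2 variables occur free. -/
inductive T2Form : Type where
  | eq : T2Term → T2Term → T2Form
  | lt : T2Term → T2Term → T2Form
  | neg : T2Form → T2Form
  | disj : T2Form → T2Form → T2Form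
  | exN : ℕ → T2Form → T2Form
  | allN : ℕ → T2Form → T2Form
  | exF : ℕ → T2Form → T2Form
  | allF : ℕ → T2Form → T2Form

def T2Form.sat : T2Form → (ℕ → ℕ) → (ℕ → ℕ → ℕ) → (ℕ → (ℕ → ℕ) → ℕ) → Prop
  | .eq s t, v, g, G => s.eval v g G = t.eval v g G
  | .lt s t, v, g, G => s.eval v g G < t.eval v g G
  | .neg φ, v, g, G => ¬ φ.sat v g G
  | .disj φ ψ, v, g, G => φ.sat v g G ∨ ψ.sat v g G
  | .exN x φ, v, g, G => ∃ n : ℕ, φ.sat (Function.update v x n) g G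
  | .allN x φ, v, g, G => ∀ n : ℕ, φ.sat (Function.update v x n) g G
  | .exF x φ, v, g, G => ∃ h : ℕ → ℕ, φ.sat v (Function.update g x h) G
  | .allF x φ, v, g, G => ∀ h : ℕ → ℕ, φ.sat v (Function.update g x h) G

/-- A set `N ⊆ ℕ` is Σ²₁ if it is defined by existential quantification over
type-2 objects followed by an arithmetic formula with arbitrary quantification
over type-0 and type-1 objects. -/
def Sigma21 (N : Set ℕ) : Prop :=
  ∃ ψ : T2Form, ∀ x : ℕ, x ∈ N ↔
    ∃ G : ℕ → (ℕ → ℕ) → ℕ, ψ.sat (fun _ => x) (fun _ _ => 0) G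

/-- The set of codes of satisfiable HyperCTL* sentences. -/
def CTLSatCodes : Set ℕ :=
  {n : ℕ | ∃ φ : CTL ℕ, φ.IsSentence ∧ φ.code = n ∧ ∃ S : TS ℕ, CModels S φ}


/-!
Upper bound: a Skolem hull closed under the witnesses of all path quantifiers is the image of `ℕ
→ ℕ` (its elements are named by countably branching terms), so a satisfiable sentence has a
model whose vertices are functions `ℕ → ℕ`. Its edges, its labels and its satisfaction relation
are then type-2 objects, an assignment of paths is coded by a single function `ℕ → ℕ`, and
Tarski's truth conditions are arithmetic in these objects.

Lower bound: a path codes a set of natural numbers by its labels. HyperCTL* can force that every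
set is the code of some path, namely by a full binary tree, and further labels code ternary
relations between sets. Among these are addition and multiplication of singletons, pinned down
by their recursion equations, which give a pairing function, and with it the functions `ℕ → ℕ`,
as sets of pairs. A relation between functions and numbers is then a type-2 object.
-/

/-! ### Pairing and codes -/

/-- A polynomial pairing function. Unlike `Nat.pair` it is the value of a term of arithmetic. -/
def polyPair (a b : ℕ) : ℕ := (a + b) * (a + b) + a

lemma polyPair_inj {a b c d : ℕ} : polyPair a b = polyPair c d ↔ a = c ∧ b = d := by
  refine ⟨fun h => ?_, fun ⟨hac, hbd⟩ => by rw [hac, hbd]⟩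
  unfold polyPair at h
  have hsum : a + b = c + d := by
    rcases lt_trichotomy (a + b) (c + d) with hlt | heq | hlt
    · nlinarith
    · exact heq
    · nlinarith
  rw [hsum] at h
  omega

lemma lt_natPair_of_pos {a b : ℕ} (ha : 0 < a) : b < Nat.pair a b := by
  unfold Nat.pair
  split <;> nlinarith

lemma CTL.code_injective : Function.Injective CTL.code := by
  intro φ
  induction φ <;> intro ψ h <;> cases ψ <;> simp_all [code, Nat.pair_eq_pair] <;> tauto

@[simp]
lemma CTL.code_inj {φ ψ : CTL ℕ} : φ.code = ψ.code ↔ φ = ψ := CTL.code_injective.eq_iff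

instance : Countable (CTL ℕ) := ⟨⟨CTL.code, CTL.code_injective⟩⟩

/-! ### Downward Löwenheim–Skolem -/

/-- Closed terms over a constant `init` and function symbols `ι` of countable arity: the names of
the elements of a Skolem hull. -/
inductive SkolemTerm (ι : Type) : Type where
  | init : SkolemTerm ι
  | node : ι → (ℕ → SkolemTerm ι) → SkolemTerm ι

namespace SkolemTerm

variable {ι V : Type}

/-- The symbol at a position of a term, `none` at and below the leaves. -/
def label : SkolemTerm ι → List ℕ → Option ι
  | .init, _ => none
  | .node c _, [] => some c
  | .node _ ts, n :: l => (ts n).label l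

lemma label_injective : Function.Injective (label (ι := ι)) := by
  intro s
  induction s with
  | init =>
    rintro (_ | ⟨c, ts⟩) h
    · rfl
    · simpa [label] using congrFun h []
  | node c ts ih =>
    rintro (_ | ⟨c', ts'⟩) h
    · simpa [label] using congrFun h []
    · obtain rfl : c = c' := by simpa [label] using congrFun h []
      exact congrArg _ (funext fun n => ih n (funext fun l => congrFun h (n :: l)))

lemma exists_surjective [Countable ι] :
    ∃ s : (ℕ → ℕ) → SkolemTerm ι, Function.Surjective s := by
  obtain ⟨f, hf⟩ := exists_surjective_nat (Option ι)
  have : Nonempty (SkolemTerm ι) := ⟨.init⟩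
  refine ⟨fun a => Function.invFun label fun l => f (a (Encodable.encode l)),
    (Function.invFun_surjective label_injective).comp fun g => ?_⟩
  choose k hk using hf
  exact ⟨fun n => k (g (Denumerable.ofNat (List ℕ) n)), by simp [hk]⟩

/-- The value of a term when `init` and the function symbols are interpreted by `v₀` and `f`. -/
def eval (v₀ : V) (f : ι → (ℕ → V) → V) : SkolemTerm ι → V
  | .init => v₀
  | .node c ts => f c fun n => (ts n).eval v₀ f

end SkolemTerm

lemma exists_range_closed {ι V : Type} [Countable ι] (v₀ : V) (f : ι → (ℕ → V) → V) :
    ∃ p : (ℕ → ℕ) → V, v₀ ∈ Set.range p ∧ ∀ c a, f c (p ∘ a) ∈ Set.range p := by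
  obtain ⟨s, hs⟩ := SkolemTerm.exists_surjective (ι := ι)
  refine ⟨fun x => (s x).eval v₀ f, ?_, fun c a => ?_⟩
  · obtain ⟨x, hx⟩ := hs .init
    exact ⟨x, by simp [hx, SkolemTerm.eval]⟩
  · obtain ⟨x, hx⟩ := hs (.node c (s ∘ a))
    exact ⟨x, by simp [hx, SkolemTerm.eval, Function.comp_def]⟩

/-- A formula that is always true. -/
def CTL.taut {AP : Type} (a : AP) : CTL AP := .disj (.atom a 0) (.neg (.atom a 0))

@[simp]
lemma CTL.sat_taut {AP : Type} {S : TS AP} {a : AP} {As : ℕ → ℕ → S.V} {r : ℕ} :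
    (CTL.taut a).sat S As r :=
  Classical.em _

lemma CTL.sat_all_iff {AP : Type} {S : TS AP} {x : ℕ} {φ : CTL AP} {As : ℕ → ℕ → S.V} {r : ℕ} :
    (CTL.all x φ).sat S As r ↔ ¬ (CTL.ex x φ.neg).sat S As r := by
  simp [CTL.sat]

namespace TS

variable {AP W : Type} {S : TS AP}

lemma exists_isPath (S : TS AP) (v : S.V) : ∃ ρ : ℕ → S.V, S.IsPath ρ ∧ ρ 0 = v := by
  choose f hf using S.succ
  exact ⟨fun n => f^[n] v, fun i => by simpa only [Function.iterate_succ_apply'] using hf _, rfl⟩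

/-- The Tarski–Vaught criterion for the range of `p`: an existential path quantifier with
parameters in the range is witnessed by a path in the range. -/
def TarskiVaught (S : TS AP) (p : W → S.V) : Prop :=
  ∀ (φ : CTL AP) (x : ℕ) (As : ℕ → ℕ → W) (r : ℕ),
    (CTL.ex x φ).sat S (fun y => p ∘ As y) r →
      ∃ ρ : ℕ → W, S.IsPath (p ∘ ρ) ∧ p (ρ 0) = p (As r 0) ∧
        φ.sat S (Function.update (fun y => p ∘ As y) x (p ∘ ρ)) x

lemma exists_tarskiVaught [Countable (CTL AP)] (S : TS AP) :
    ∃ p : (ℕ → ℕ) → S.V, S.vI ∈ Set.range p ∧ S.TarskiVaught p := by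
  have hskolem : ∀ (φ : CTL AP) (x r : ℕ) (As : ℕ → ℕ → S.V), ∃ ρ : ℕ → S.V,
      (CTL.ex x φ).sat S As r →
        S.IsPath ρ ∧ ρ 0 = As r 0 ∧ φ.sat S (Function.update As x ρ) x := by
    intro φ x r As
    by_cases h : (CTL.ex x φ).sat S As r
    · obtain ⟨ρ, hρ⟩ := h
      exact ⟨ρ, fun _ => hρ⟩
    · exact ⟨fun _ => S.vI, fun h' => absurd h' h⟩
  choose skolem skolem_spec using hskolem
  obtain ⟨p, hv, hp⟩ := exists_range_closed S.vI
    fun (c : CTL AP × ℕ × ℕ × ℕ) a => skolem c.1 c.2.1 c.2.2.1 (fun y i => a (Nat.pair y i)) c.2.2.2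
  refine ⟨p, hv, fun φ x As r h => ?_⟩
  have hmem : ∀ k, ∃ w, p w = skolem φ x r (fun y => p ∘ As y) k := fun k => by
    simpa [Function.comp_def] using hp (φ, x, r, k) fun n => As n.unpair.1 n.unpair.2
  choose ρ hρ using hmem
  obtain ⟨hpath, hstart, hsat⟩ := skolem_spec φ x r _ h
  rw [← show p ∘ ρ = _ from funext hρ] at hpath hstart hsat
  exact ⟨ρ, hpath, hstart, hsat⟩

/-- The transition system induced by `S` on a type mapping into its vertices. -/
abbrev comap (S : TS AP) (p : W → S.V) (w₀ : W) (hp : ∀ v, ∃ w, S.E (p v) (p w)) : TS AP where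
  V := W
  E v w := S.E (p v) (p w)
  vI := w₀
  lab v := S.lab (p v)
  succ := hp

namespace TarskiVaught

variable {p : W → S.V} {w₀ : W} {hp : ∀ v, ∃ w, S.E (p v) (p w)}

lemma exists_edge [Nonempty AP] (h : S.TarskiVaught p) (v : W) : ∃ w, S.E (p v) (p w) := by
  obtain ⟨ρ, hpath, hstart⟩ := S.exists_isPath (p v)
  obtain ⟨ρ', hpath', hstart', -⟩ :=
    h (.taut (Classical.arbitrary AP)) 0 (fun _ _ => v) 0 ⟨ρ, hpath, hstart, CTL.sat_taut⟩
  exact ⟨ρ' 1, hstart' ▸ hpath' 0⟩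

lemma sat_ex_comap (h : S.TarskiVaught p) {φ : CTL AP}
    (ih : ∀ As r, φ.sat (S.comap p w₀ hp) As r ↔ φ.sat S (fun y => p ∘ As y) r)
    (x : ℕ) (As : ℕ → ℕ → W) (r : ℕ) :
    (CTL.ex x φ).sat (S.comap p w₀ hp) As r ↔ (CTL.ex x φ).sat S (fun y => p ∘ As y) r := by
  have hupdate (ρ : ℕ → W) : (fun y => p ∘ Function.update As x ρ y) =
      Function.update (fun y => p ∘ As y) x (p ∘ ρ) :=
    Function.comp_update (p ∘ ·) As x ρ
  constructor
  · rintro ⟨ρ, hpath, hstart, hsat⟩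
    exact ⟨p ∘ ρ, hpath, congrArg p hstart, hupdate ρ ▸ (ih _ _).1 hsat⟩
  · intro hex
    obtain ⟨ρ, hpath, hstart, hsat⟩ := h φ x As r hex
    -- `p` need not be injective, so `ρ` has to be made to start at `As r 0` itself.
    have hρ : p ∘ Function.update ρ 0 (As r 0) = p ∘ ρ := by
      rw [Function.comp_update, ← hstart]
      exact Function.update_eq_self 0 (p ∘ ρ)
    refine ⟨Function.update ρ 0 (As r 0), fun i => ?_, Function.update_self .., (ih _ _).2 ?_⟩
    · exact (show S.IsPath (p ∘ Function.update ρ 0 (As r 0)) from hρ ▸ hpath) i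
    · rwa [hupdate, hρ]

lemma sat_comap (h : S.TarskiVaught p) (φ : CTL AP) (As : ℕ → ℕ → W) (r : ℕ) :
    φ.sat (S.comap p w₀ hp) As r ↔ φ.sat S (fun y => p ∘ As y) r := by
  induction φ generalizing As r with
  | atom a x => rfl
  | neg φ ih => exact not_congr (ih _ _)
  | disj φ ψ ihφ ihψ => exact or_congr (ihφ _ _) (ihψ _ _)
  | next _ ih => exact ih _ _
  | untl φ ψ ihφ ihψ =>
    exact exists_congr fun j => and_congr (ihψ _ _) (forall₂_congr fun j' _ => ihφ _ _)
  | ex x ψ ih => exact h.sat_ex_comap (φ := ψ) ih x As r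
  | all x ψ ih =>
    rw [CTL.sat_all_iff, CTL.sat_all_iff, h.sat_ex_comap (φ := ψ.neg)
      fun As r => not_congr (ih As r)]

end TarskiVaught

theorem exists_small_model [Countable (CTL AP)] [Nonempty AP] (S : TS AP) :
    ∃ (E : (ℕ → ℕ) → (ℕ → ℕ) → Prop) (v₀ : ℕ → ℕ) (lab : (ℕ → ℕ) → Set AP)
      (succ : ∀ v, ∃ w, E v w), ∀ φ, CModels S φ → CModels ⟨ℕ → ℕ, E, v₀, lab, succ⟩ φ := by
  obtain ⟨p, ⟨v₀, hv₀⟩, hp⟩ := S.exists_tarskiVaught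
  refine ⟨fun v w => S.E (p v) (p w), v₀, fun v => S.lab (p v), hp.exists_edge,
    fun φ hφ ρ hpath hstart => ?_⟩
  exact (hp.sat_comap (w₀ := v₀) φ _ 0).2 (hφ (p ∘ ρ) hpath (hv₀ ▸ congrArg p hstart))

end TS

/-! ### Truth definitions for coded formulas -/

/-- Which numbers are codes of formulas, together with the satisfaction relation, the free
variables and the guardedness of the coded formulas. -/
structure Decoration (V : Type) : Type where
  isCode : ℕ → Prop
  sat : ℕ → ℕ → (ℕ → ℕ → V) → Prop
  free : ℕ → ℕ → Prop
  guarded : ℕ → Prop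

namespace Decoration

variable {V : Type}

/-- The data of `D` at the code `c` are the given ones. -/
def Describes (D : Decoration V) (c : ℕ) (truth : ℕ → (ℕ → ℕ → V) → Prop) (free : ℕ → Prop)
    (guarded : Prop) : Prop :=
  (∀ r As, D.sat c r As ↔ truth r As) ∧ (∀ y, D.free c y ↔ free y) ∧ (D.guarded c ↔ guarded)

variable {S : TS ℕ} {D : Decoration S.V}

/-- `D` contains the correct data about the formula `φ`. -/
def Represents (S : TS ℕ) (D : Decoration S.V) (φ : CTL ℕ) : Prop :=
  D.isCode φ.code ∧ D.Describes φ.code (fun r As => φ.sat S As r) (· ∈ φ.freeVars) φ.guarded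

/-- Tarski's clauses: `c` is the code of a formula whose data arise from those of its immediate
subformulas. -/
def Clause (S : TS ℕ) (D : Decoration S.V) (c : ℕ) : Prop :=
  (∃ a x, c = Nat.pair 0 (Nat.pair a x) ∧
    D.Describes c (fun _ As => a ∈ S.lab (As x 0)) (· = x) True) ∨
  (∃ d, c = Nat.pair 1 d ∧ D.isCode d ∧
    D.Describes c (fun r As => ¬ D.sat d r As) (D.free d) (D.guarded d)) ∨
  (∃ d e, c = Nat.pair 2 (Nat.pair d e) ∧ D.isCode d ∧ D.isCode e ∧
    D.Describes c (fun r As => D.sat d r As ∨ D.sat e r As) (fun y => D.free d y ∨ D.free e y)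
      (D.guarded d ∧ D.guarded e)) ∨
  (∃ d, c = Nat.pair 3 d ∧ D.isCode d ∧
    D.Describes c (fun r As => D.sat d r fun x i => As x (i + 1)) (D.free d) False) ∨
  (∃ d e, c = Nat.pair 4 (Nat.pair d e) ∧ D.isCode d ∧ D.isCode e ∧
    D.Describes c (fun r As => ∃ j, D.sat e r (fun x i => As x (i + j)) ∧
      ∀ j' < j, D.sat d r fun x i => As x (i + j')) (fun y => D.free d y ∨ D.free e y) False) ∨
  (∃ x d, c = Nat.pair 5 (Nat.pair x d) ∧ D.isCode d ∧
    D.Describes c (fun r As => ∃ ρ, S.IsPath ρ ∧ ρ 0 = As r 0 ∧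
      D.sat d x (Function.update As x ρ))
      (fun y => D.free d y ∧ y ≠ x) True) ∨
  (∃ x d, c = Nat.pair 6 (Nat.pair x d) ∧ D.isCode d ∧
    D.Describes c (fun r As => ∀ ρ, S.IsPath ρ → ρ 0 = As r 0 →
      D.sat d x (Function.update As x ρ))
      (fun y => D.free d y ∧ y ≠ x) True)

lemma Represents.sat_eq {φ : CTL ℕ} (h : D.Represents S φ) :
    D.sat φ.code = fun r As => φ.sat S As r :=
  funext₂ fun r As => propext (h.2.1 r As)

lemma Represents.free_eq {φ : CTL ℕ} (h : D.Represents S φ) :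
    D.free φ.code = (· ∈ φ.freeVars) :=
  funext fun y => propext (h.2.2.1 y)

lemma Represents.guarded_eq {φ : CTL ℕ} (h : D.Represents S φ) :
    D.guarded φ.code = φ.guarded :=
  propext h.2.2.2

lemma clause_of_forall_represents (h : ∀ φ, D.Represents S φ) (φ : CTL ℕ) : D.Clause S φ.code := by
  have hcode φ := (h φ).1
  have hφ := (h φ).2
  cases φ with
  | atom a x => exact .inl ⟨a, x, rfl, hφ⟩
  | neg φ =>
    refine .inr (.inl ⟨_, rfl, hcode φ, ?_⟩)
    rwa [(h φ).sat_eq, (h φ).free_eq, (h φ).guarded_eq]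
  | disj φ ψ =>
    refine .inr (.inr (.inl ⟨_, _, rfl, hcode φ, hcode ψ, ?_⟩))
    rwa [(h φ).sat_eq, (h φ).free_eq, (h φ).guarded_eq, (h ψ).sat_eq, (h ψ).free_eq,
      (h ψ).guarded_eq]
  | next φ =>
    refine .inr (.inr (.inr (.inl ⟨_, rfl, hcode φ, ?_⟩)))
    rwa [(h φ).sat_eq, (h φ).free_eq]
  | untl φ ψ =>
    refine .inr (.inr (.inr (.inr (.inl ⟨_, _, rfl, hcode φ, hcode ψ, ?_⟩))))
    rwa [(h φ).sat_eq, (h φ).free_eq, (h ψ).sat_eq, (h ψ).free_eq]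
  | ex x φ =>
    refine .inr (.inr (.inr (.inr (.inr (.inl ⟨x, _, rfl, hcode φ, ?_⟩)))))
    rwa [(h φ).sat_eq, (h φ).free_eq]
  | all x φ =>
    refine .inr (.inr (.inr (.inr (.inr (.inr ⟨x, _, rfl, hcode φ, ?_⟩)))))
    rwa [(h φ).sat_eq, (h φ).free_eq]

lemma exists_represents (h : ∀ c, D.isCode c → D.Clause S c) {c : ℕ} (hc : D.isCode c) :
    ∃ φ : CTL ℕ, φ.code = c ∧ D.Represents S φ := by
  induction c using Nat.strong_induction_on with | _ c ih
  have lt_left {k a b : ℕ} (hk : 0 < k) : a < Nat.pair k (Nat.pair a b) :=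
    (Nat.left_le_pair a b).trans_lt (lt_natPair_of_pos hk)
  have lt_right {k a b : ℕ} (hk : 0 < k) : b < Nat.pair k (Nat.pair a b) :=
    (Nat.right_le_pair a b).trans_lt (lt_natPair_of_pos hk)
  rcases h c hc with ⟨a, x, rfl, hD⟩ | ⟨d, rfl, hd, hD⟩ | ⟨d, e, rfl, hd, he, hD⟩ |
    ⟨d, rfl, hd, hD⟩ | ⟨d, e, rfl, hd, he, hD⟩ | ⟨x, d, rfl, hd, hD⟩ | ⟨x, d, rfl, hd, hD⟩
  · exact ⟨.atom a x, rfl, hc, hD⟩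
  · obtain ⟨φ, rfl, hφ⟩ := ih d (lt_natPair_of_pos one_pos) hd
    exact ⟨.neg φ, rfl, hc, by rwa [hφ.sat_eq, hφ.free_eq, hφ.guarded_eq] at hD⟩
  · obtain ⟨φ, rfl, hφ⟩ := ih d (lt_left two_pos) hd
    obtain ⟨ψ, rfl, hψ⟩ := ih e (lt_right two_pos) he
    exact ⟨.disj φ ψ, rfl, hc, by
      rwa [hφ.sat_eq, hφ.free_eq, hφ.guarded_eq, hψ.sat_eq, hψ.free_eq, hψ.guarded_eq] at hD⟩
  · obtain ⟨φ, rfl, hφ⟩ := ih d (lt_natPair_of_pos three_pos) hd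
    exact ⟨.next φ, rfl, hc, by rwa [hφ.sat_eq, hφ.free_eq] at hD⟩
  · obtain ⟨φ, rfl, hφ⟩ := ih d (lt_left four_pos) hd
    obtain ⟨ψ, rfl, hψ⟩ := ih e (lt_right four_pos) he
    exact ⟨.untl φ ψ, rfl, hc, by rwa [hφ.sat_eq, hφ.free_eq, hψ.sat_eq, hψ.free_eq] at hD⟩
  · obtain ⟨φ, rfl, hφ⟩ := ih d (lt_right (by norm_num)) hd
    exact ⟨.ex x φ, rfl, hc, by rwa [hφ.sat_eq, hφ.free_eq] at hD⟩
  · obtain ⟨φ, rfl, hφ⟩ := ih d (lt_right (by norm_num)) hd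
    exact ⟨.all x φ, rfl, hc, by rwa [hφ.sat_eq, hφ.free_eq] at hD⟩

lemma exists_forall_represents (S : TS ℕ) :
    ∃ D : Decoration S.V, (∀ φ, D.Represents S φ) ∧ ∀ c, D.isCode c → D.Clause S c := by
  let D : Decoration S.V :=
    { isCode c := ∃ φ : CTL ℕ, φ.code = c
      sat c r As := ∃ φ : CTL ℕ, φ.code = c ∧ φ.sat S As r
      free c y := ∃ φ : CTL ℕ, φ.code = c ∧ y ∈ φ.freeVars
      guarded c := ∃ φ : CTL ℕ, φ.code = c ∧ φ.guarded }
  have hD : ∀ φ, D.Represents S φ := fun φ => by simp [D, Represents, Describes]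
  exact ⟨D, hD, fun c ⟨φ, hφ⟩ => hφ ▸ clause_of_forall_represents hD φ⟩

/-- `D` certifies that `n` is the code of a sentence with model `S`. -/
def Certifies (S : TS ℕ) (D : Decoration S.V) (n : ℕ) : Prop :=
  (∀ c, D.isCode c → D.Clause S c) ∧ D.isCode n ∧ D.guarded n ∧ (∀ y, ¬ D.free n y) ∧
    ∀ ρ, S.IsPath ρ → ρ 0 = S.vI → D.sat n 0 fun _ => ρ

lemma exists_certifies_iff {n : ℕ} :
    (∃ D : Decoration S.V, D.Certifies S n) ↔
      ∃ φ : CTL ℕ, φ.IsSentence ∧ φ.code = n ∧ CModels S φ := by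
  constructor
  · rintro ⟨D, hclause, hcode, hguarded, hfree, hmodel⟩
    obtain ⟨φ, rfl, hφ⟩ := exists_represents hclause hcode
    rw [hφ.sat_eq] at hmodel
    rw [hφ.free_eq] at hfree
    rw [hφ.guarded_eq] at hguarded
    exact ⟨φ, ⟨Set.eq_empty_of_forall_notMem hfree, hguarded⟩, rfl, hmodel⟩
  · rintro ⟨φ, ⟨hfree, hguarded⟩, rfl, hmodel⟩
    obtain ⟨D, hD, hclause⟩ := exists_forall_represents S
    refine ⟨D, hclause, (hD φ).1, ?_, ?_, ?_⟩
    · rwa [(hD φ).guarded_eq]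
    · simp [(hD φ).free_eq, hfree]
    · rwa [(hD φ).sat_eq]

end Decoration

theorem mem_ctlSatCodes_iff {n : ℕ} :
    n ∈ CTLSatCodes ↔ ∃ (E : (ℕ → ℕ) → (ℕ → ℕ) → Prop) (v₀ : ℕ → ℕ) (lab : (ℕ → ℕ) → Set ℕ)
      (succ : ∀ v, ∃ w, E v w) (D : Decoration (ℕ → ℕ)),
        D.Certifies ⟨ℕ → ℕ, E, v₀, lab, succ⟩ n := by
  constructor
  · rintro ⟨φ, hφ, hcode, S, hmodel⟩
    obtain ⟨E, v₀, lab, succ, hsmall⟩ := S.exists_small_model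
    exact ⟨E, v₀, lab, succ,
      Decoration.exists_certifies_iff.2 ⟨φ, hφ, hcode, hsmall φ hmodel⟩⟩
  · rintro ⟨E, v₀, lab, succ, hD⟩
    obtain ⟨φ, hφ, hcode, hmodel⟩ :=
      (Decoration.exists_certifies_iff (S := ⟨ℕ → ℕ, E, v₀, lab, succ⟩)).1 hD
    exact ⟨φ, hφ, hcode, _, hmodel⟩

/-! ### Coding of sequences, paths and assignments -/

/-- The sequence `a, f 0, f 1, …`. -/
def seqCons {α : Type} (a : α) (f : ℕ → α) : ℕ → α
  | 0 => a
  | n + 1 => f n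

lemma eq_seqCons_iff {α : Type} {a : α} {f h : ℕ → α} :
    h = seqCons a f ↔ h 0 = a ∧ ∀ n, h (n + 1) = f n :=
  ⟨by rintro rfl; exact ⟨rfl, fun _ => rfl⟩,
    fun ⟨hzero, hsucc⟩ => funext fun | 0 => hzero | n + 1 => hsucc n⟩

lemma seqCons_inj {α : Type} {a b : α} {f g : ℕ → α} :
    seqCons a f = seqCons b g ↔ a = b ∧ f = g := by
  rw [eq_seqCons_iff, funext_iff]
  rfl

/-- A function on pairs as a sequence of functions. -/
def rows : (ℕ → ℕ) ≃ (ℕ → ℕ → ℕ) where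
  toFun p i k := p (Nat.pair i k)
  invFun ρ n := ρ n.unpair.1 n.unpair.2
  left_inv p := by simp
  right_inv ρ := by simp

lemma eq_rows_symm_seqCons_iff {h v w : ℕ → ℕ} : h = rows.symm (seqCons v fun _ => w) ↔
    (∀ k, rows h 0 k = v k) ∧ ∀ i k, rows h (i + 1) k = w k := by
  rw [Equiv.eq_symm_apply, eq_seqCons_iff, funext_iff]
  simp only [funext_iff]

/-- A function on triples as an assignment of paths to the path variables. -/
def assignments : (ℕ → ℕ) ≃ (ℕ → ℕ → ℕ → ℕ) where
  toFun A x := rows (rows A x)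
  invFun As := rows.symm fun x => rows.symm (As x)
  left_inv A := by simp
  right_inv As := by simp

/-- The edge relation coded by a type-2 object. -/
def edgeOf (H : (ℕ → ℕ) → ℕ) (v w : ℕ → ℕ) : Prop := H (rows.symm (seqCons v fun _ => w)) = 0

/-- The labelling coded by a type-2 object. -/
def labelOf (H : (ℕ → ℕ) → ℕ) (v : ℕ → ℕ) : Set ℕ := {a | H (seqCons a v) = 0}

/-- The satisfaction relation coded by a type-2 object. -/
def satOf (H : (ℕ → ℕ) → ℕ) (c r : ℕ) (As : ℕ → ℕ → ℕ → ℕ) : Prop :=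
  H (seqCons c (seqCons r (assignments.symm As))) = 0

lemma exists_eq_zero_iff {α β : Type} {f : α → β} (hf : Function.Injective f) (R : α → Prop) :
    ∃ H : β → ℕ, ∀ a, H (f a) = 0 ↔ R a := by
  classical
  exact ⟨fun b => if ∃ a, f a = b ∧ R a then 0 else 1, by simp [hf.eq_iff]⟩

lemma exists_edgeOf_eq (E : (ℕ → ℕ) → (ℕ → ℕ) → Prop) : ∃ H, edgeOf H = E := by
  have hinj : Function.Injective fun e : (ℕ → ℕ) × (ℕ → ℕ) =>
      rows.symm (seqCons e.1 fun _ => e.2) := fun e e' h => by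
    obtain ⟨hfst, hsnd⟩ := seqCons_inj.1 (rows.symm.injective h)
    exact Prod.ext hfst (congrFun hsnd 0)
  obtain ⟨H, hH⟩ := exists_eq_zero_iff hinj fun e => E e.1 e.2
  exact ⟨H, funext₂ fun v w => propext (hH (v, w))⟩

lemma exists_labelOf_eq (lab : (ℕ → ℕ) → Set ℕ) : ∃ H, labelOf H = lab := by
  have hinj : Function.Injective fun l : ℕ × (ℕ → ℕ) => seqCons l.1 l.2 := fun l l' h =>
    Prod.ext_iff.2 (seqCons_inj.1 h)
  obtain ⟨H, hH⟩ := exists_eq_zero_iff hinj fun l => l.1 ∈ lab l.2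
  exact ⟨H, funext fun v => Set.ext fun a => hH (a, v)⟩

lemma exists_satOf_eq (sat : ℕ → ℕ → (ℕ → ℕ → ℕ → ℕ) → Prop) : ∃ H, satOf H = sat := by
  have hinj : Function.Injective fun s : ℕ × ℕ × (ℕ → ℕ → ℕ → ℕ) =>
      seqCons s.1 (seqCons s.2.1 (assignments.symm s.2.2)) := fun s s' h => by
    simpa [seqCons_inj, Prod.ext_iff] using h
  obtain ⟨H, hH⟩ := exists_eq_zero_iff hinj fun s => sat s.1 s.2.1 s.2.2
  exact ⟨H, funext₂ fun c r => funext fun As => propext (hH (c, r, As))⟩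

lemma exists_ne_zero_eq (R : ℕ → Prop) : ∃ u : ℕ → ℕ, (fun c => u c ≠ 0) = R := by
  obtain ⟨u, hu⟩ := exists_eq_zero_iff Function.injective_id fun c => ¬ R c
  exact ⟨u, funext fun c => propext (not_iff_comm.1 (hu c).symm)⟩

lemma exists_ne_zero_pair_eq (R : ℕ → ℕ → Prop) :
    ∃ u : ℕ → ℕ, (fun c y => u (Nat.pair c y) ≠ 0) = R := by
  obtain ⟨u, hu⟩ := exists_ne_zero_eq fun n => R n.unpair.1 n.unpair.2
  exact ⟨u, funext₂ fun c y => by simpa using congrFun hu (Nat.pair c y)⟩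

/-! ### Formulas of third-order arithmetic -/

namespace T2Term

/-- The numeral of a natural number. -/
def numeral : ℕ → T2Term
  | 0 => .zero
  | n + 1 => .add (numeral n) .one

/-- The pair of two numbers, provided that the function variable `0` satisfies `IsPairing`. -/
def pair (s t : T2Term) : T2Term := .app1 0 (.add (.mul (.add s t) (.add s t)) s)

/-- The successor of a number. -/
def succ (t : T2Term) : T2Term := .add t .one

variable {v : ℕ → ℕ} {g : ℕ → ℕ → ℕ} {G : ℕ → (ℕ → ℕ) → ℕ}

@[simp]
lemma eval_numeral (n : ℕ) : (numeral n).eval v g G = n := by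
  induction n with
  | zero => rfl
  | succ n ih => rw [numeral, eval, ih, eval]

end T2Term

/-- `P` computes `Nat.pair` from the polynomial pairing. A formula can thus speak about `Nat.pair`,
which is not the value of a term, through a function variable. -/
def IsPairing (P : ℕ → ℕ) : Prop := ∀ a b, P (polyPair a b) = Nat.pair a b

lemma exists_isPairing : ∃ P, IsPairing P := by
  have hinj : Function.Injective fun c : ℕ × ℕ => polyPair c.1 c.2 := fun c c' h =>
    Prod.ext_iff.2 (polyPair_inj.1 h)
  exact ⟨Function.extend (fun c : ℕ × ℕ => polyPair c.1 c.2) (fun c => Nat.pair c.1 c.2) 0,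
    fun a b => hinj.extend_apply _ _ (a, b)⟩

lemma isPairing_iff {P : ℕ → ℕ} : IsPairing P ↔ ∀ a b,
    a < b ∧ P (polyPair a b) = b * b + a ∨ ¬ a < b ∧ P (polyPair a b) = a * a + a + b := by
  refine forall₂_congr fun a b => ?_
  by_cases h : a < b <;> simp [Nat.pair, h]

namespace T2Form

/-- Conjunction. -/
def conj (φ ψ : T2Form) : T2Form := .neg (.disj φ.neg ψ.neg)

/-- Implication. -/
def imp (φ ψ : T2Form) : T2Form := .disj φ.neg ψ

/-- Equivalence. -/
def iff (φ ψ : T2Form) : T2Form := conj (imp φ ψ) (imp ψ φ)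

/-- The predicate `t ≠ 0`. -/
def nonzero (t : T2Term) : T2Form := .neg (.eq t .zero)

/-- A true formula. -/
def verum : T2Form := .eq .zero .zero

section

variable {φ ψ : T2Form} {s t : T2Term} {v : ℕ → ℕ} {g : ℕ → ℕ → ℕ} {G : ℕ → (ℕ → ℕ) → ℕ}

@[simp]
lemma sat_conj : (conj φ ψ).sat v g G ↔ φ.sat v g G ∧ ψ.sat v g G := by simp [conj, sat]

@[simp]
lemma sat_imp : (imp φ ψ).sat v g G ↔ (φ.sat v g G → ψ.sat v g G) := by
  simp [imp, sat, imp_iff_not_or]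

@[simp]
lemma sat_iff : (iff φ ψ).sat v g G ↔ (φ.sat v g G ↔ ψ.sat v g G) := by simp [iff, iff_def]

@[simp]
lemma sat_nonzero : (nonzero t).sat v g G ↔ t.eval v g G ≠ 0 := Iff.rfl

@[simp]
lemma sat_verum : verum.sat v g G := rfl

end

end T2Form

/-! ### The certificate as a formula -/

section Certificate

local infix:50 " ≐ " => T2Form.eq
local infixr:35 " ⋏ " => T2Form.conj

open T2Form T2Term

/- Function variables: `0` the pairing, `1` the codes, `2` the free variables, `3` guardedness,
`4` the initial vertex, `5` an assignment, `6` a path, `7` a modified assignment, `8` an argument of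
a type-2 object. Type-2 variables: `0` satisfaction, `1` edges, `2` labels. Number variables: `0` a
code, `1` the most recent path variable, `2` a free variable, `3` and `4` the components of a code,
`5` and `6` time offsets; the others are local to the auxiliary formulas. -/

/-- The transition system coded by `G` and an initial vertex. -/
abbrev codedTS (G : ℕ → (ℕ → ℕ) → ℕ) (v₀ : ℕ → ℕ) (succ : ∀ v, ∃ w, edgeOf (G 1) v w) : TS ℕ :=
  ⟨ℕ → ℕ, edgeOf (G 1), v₀, labelOf (G 2), succ⟩

/-- The decoration coded by the values of the variables of a formula. -/
abbrev codedDecoration (g : ℕ → ℕ → ℕ) (G : ℕ → (ℕ → ℕ) → ℕ) : Decoration (ℕ → ℕ) where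
  isCode c := g 1 c ≠ 0
  sat := satOf (G 0)
  free c y := g 2 (Nat.pair c y) ≠ 0
  guarded c := g 3 c ≠ 0

/-- The entry of the path `p` at time `i` and index `k`. -/
def pathEntry (p : ℕ) (i k : T2Term) : T2Term := .app1 p (.pair i k)

/-- The entry of the assignment `A` at path variable `x`, time `i` and index `k`. -/
def assignmentEntry (A : ℕ) (x i k : T2Term) : T2Term := .app1 A (.pair x (.pair i k))

/-- The constraint on the function variable `0`. -/
def pairingF : T2Form :=
  .allN 0 <| .allN 1 <|
    .disj (.lt (.var 0) (.var 1) ⋏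
        T2Term.pair (.var 0) (.var 1) ≐ .add (.mul (.var 1) (.var 1)) (.var 0))
      (.neg (.lt (.var 0) (.var 1)) ⋏ T2Term.pair (.var 0) (.var 1) ≐
        .add (.add (.mul (.var 0) (.var 0)) (.var 0)) (.var 1))

/-- The path `p` has an edge at time `i`. -/
def edgeF (p i : ℕ) : T2Form :=
  .exF 8 <| .allN 9 (pathEntry 8 .zero (.var 9) ≐ pathEntry p (.var i) (.var 9)) ⋏
    .allN 8 (.allN 9
      (pathEntry 8 (succ (.var 8)) (.var 9) ≐ pathEntry p (succ (.var i)) (.var 9))) ⋏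
    .app2 1 8 ≐ .zero

/-- `p` is a path. -/
def pathF (p : ℕ) : T2Form := .allN 7 (edgeF p 7)

/-- The vertex at the start of the path variable `x` has the label `a`. -/
def labelF (a x : ℕ) : T2Form :=
  .exF 8 <| .app1 8 .zero ≐ .var a ⋏
    .allN 9 (.app1 8 (succ (.var 9)) ≐ assignmentEntry 5 (.var x) .zero (.var 9)) ⋏
    .app2 2 8 ≐ .zero

/-- The code `c` is satisfied by the assignment `A` with most recent path variable `r`. -/
def satF (c r A : ℕ) : T2Form :=
  .exF 8 <| .app1 8 .zero ≐ .var c ⋏ .app1 8 .one ≐ .var r ⋏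
    .allN 9 (.app1 8 (succ (succ (.var 9))) ≐ .app1 A (.var 9)) ⋏ .app2 0 8 ≐ .zero

/-- The code `c` is satisfied after shifting all paths by `j`. -/
def satShiftF (c j : ℕ) : T2Form :=
  .exF 7 <| .allN 7 (.allN 8 (.allN 9 (assignmentEntry 7 (.var 7) (.var 8) (.var 9) ≐
      assignmentEntry 5 (.var 7) (.add (.var 8) (.var j)) (.var 9)))) ⋏ satF c 1 7

/-- The code `c` is satisfied after assigning the path `6` to `x`. -/
def satUpdateF (c x : ℕ) : T2Form :=
  .exF 7 <| .allN 8 (.allN 9 (assignmentEntry 7 (.var x) (.var 8) (.var 9) ≐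
      pathEntry 6 (.var 8) (.var 9))) ⋏
    .allN 7 (.imp (.neg (.var 7 ≐ .var x)) (.allN 8 (.allN 9
      (assignmentEntry 7 (.var 7) (.var 8) (.var 9) ≐
        assignmentEntry 5 (.var 7) (.var 8) (.var 9))))) ⋏ satF c x 7

/-- The path `6` starts where the path variable `1` does. -/
def startF : T2Form :=
  .allN 9 (pathEntry 6 .zero (.var 9) ≐ assignmentEntry 5 (.var 1) .zero (.var 9))

/-- The path `6` starts in the vertex `v`. -/
def startsAtF (v : ℕ) : T2Form := .allN 9 (pathEntry 6 .zero (.var 9) ≐ .app1 v (.var 9))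

/-- `c` is the code of a formula. -/
def isCodeF (c : ℕ) : T2Form := nonzero (.app1 1 (.var c))

/-- The number variable `2` is free in the code `c`. -/
def freeF (c : ℕ) : T2Form := nonzero (.app1 2 (.pair (.var c) (.var 2)))

/-- The code `c` is guarded. -/
def guardedF (c : ℕ) : T2Form := nonzero (.app1 3 (.var c))

/-- `Decoration.Describes` for the code `0`. -/
def describesF (truth free guarded : T2Form) : T2Form :=
  .allN 1 (.allF 5 (.iff (satF 0 1 5) truth)) ⋏ .allN 2 (.iff (freeF 0) free) ⋏
    .iff (guardedF 0) guarded

/-- The code `0` consists of the constructor number `k` and the argument `t`. -/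
def tagF (k : ℕ) (t : T2Term) : T2Form := .var 0 ≐ .pair (.numeral k) t

/-- `Decoration.Clause` for the code `0`. -/
def clauseF : T2Form :=
  .disj (.exN 3 <| .exN 4 <| tagF 0 (.pair (.var 3) (.var 4)) ⋏
    describesF (labelF 3 4) (.var 2 ≐ .var 4) .verum) <|
  .disj (.exN 3 <| tagF 1 (.var 3) ⋏ isCodeF 3 ⋏
    describesF (.neg (satF 3 1 5)) (freeF 3) (guardedF 3)) <|
  .disj (.exN 3 <| .exN 4 <| tagF 2 (.pair (.var 3) (.var 4)) ⋏ isCodeF 3 ⋏ isCodeF 4 ⋏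
    describesF (.disj (satF 3 1 5) (satF 4 1 5)) (.disj (freeF 3) (freeF 4))
      (guardedF 3 ⋏ guardedF 4)) <|
  .disj (.exN 3 <| tagF 3 (.var 3) ⋏ isCodeF 3 ⋏
    describesF (.exN 5 (.var 5 ≐ .one ⋏ satShiftF 3 5)) (freeF 3) (.neg .verum)) <|
  .disj (.exN 3 <| .exN 4 <| tagF 4 (.pair (.var 3) (.var 4)) ⋏ isCodeF 3 ⋏ isCodeF 4 ⋏
    describesF (.exN 5 (satShiftF 4 5 ⋏ .allN 6 (.imp (.lt (.var 6) (.var 5)) (satShiftF 3 6))))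
      (.disj (freeF 3) (freeF 4)) (.neg .verum)) <|
  .disj (.exN 3 <| .exN 4 <| tagF 5 (.pair (.var 3) (.var 4)) ⋏ isCodeF 4 ⋏
    describesF (.exF 6 (pathF 6 ⋏ startF ⋏ satUpdateF 4 3))
      (freeF 4 ⋏ .neg (.var 2 ≐ .var 3)) .verum) <|
  .exN 3 <| .exN 4 <| tagF 6 (.pair (.var 3) (.var 4)) ⋏ isCodeF 4 ⋏
    describesF (.allF 6 (.imp (pathF 6) (.imp startF (satUpdateF 4 3))))
      (freeF 4 ⋏ .neg (.var 2 ≐ .var 3)) .verum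

/-- Every vertex is the start of a path. -/
def succF : T2Form := .allF 7 (.exF 6 (pathF 6 ⋏ startsAtF 7))

/-- The assignment `5` assigns the path `6` to all path variables. -/
def constF : T2Form :=
  .allN 7 (.allN 8 (.allN 9 (assignmentEntry 5 (.var 7) (.var 8) (.var 9) ≐
    pathEntry 6 (.var 8) (.var 9))))

/-- `Decoration.Certifies` for the code `0`. -/
def certifiesF : T2Form :=
  succF ⋏ .allN 0 (.imp (isCodeF 0) clauseF) ⋏ isCodeF 0 ⋏ guardedF 0 ⋏ .allN 2 (.neg (freeF 0)) ⋏
    .allF 6 (.imp (pathF 6) (.imp (startsAtF 4)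
      (.exN 1 (.var 1 ≐ .zero ⋏ .exF 5 (constF ⋏ satF 0 1 5)))))

section

variable {v : ℕ → ℕ} {g : ℕ → ℕ → ℕ} {G : ℕ → (ℕ → ℕ) → ℕ}

lemma sat_pairingF : pairingF.sat v g G ↔ IsPairing (g 0) := by
  simp [pairingF, isPairing_iff, sat, T2Term.pair, eval, polyPair]

lemma eval_pair (hg : IsPairing (g 0)) {s t : T2Term} :
    (T2Term.pair s t).eval v g G = Nat.pair (s.eval v g G) (t.eval v g G) :=
  hg _ _

lemma eval_pathEntry (hg : IsPairing (g 0)) {p : ℕ} {i k : T2Term} :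
    (pathEntry p i k).eval v g G = rows (g p) (i.eval v g G) (k.eval v g G) := by
  simp [pathEntry, eval, eval_pair hg, rows]

lemma eval_assignmentEntry (hg : IsPairing (g 0)) {A : ℕ} {x i k : T2Term} :
    (assignmentEntry A x i k).eval v g G =
      assignments (g A) (x.eval v g G) (i.eval v g G) (k.eval v g G) := by
  simp [assignmentEntry, eval, eval_pair hg, assignments, rows]

lemma sat_edgeF (hg : IsPairing (g 0)) {p i : ℕ} (hp : p ≠ 8) (hi : i < 8) :
    (edgeF p i).sat v g G ↔ edgeOf (G 1) (rows (g p) (v i)) (rows (g p) (v i + 1)) := by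
  have hi' : i ≠ 8 ∧ i ≠ 9 := by omega
  simp [edgeF, sat, eval, eval_pathEntry, hg, hp, succ, hi', edgeOf, ← and_assoc,
    ← eq_rows_symm_seqCons_iff]

lemma sat_pathF (hg : IsPairing (g 0)) {p : ℕ} (hp : p ≠ 8) :
    (pathF p).sat v g G ↔ ∀ i, edgeOf (G 1) (rows (g p) i) (rows (g p) (i + 1)) := by
  simp [pathF, sat, sat_edgeF hg hp]

lemma sat_labelF (hg : IsPairing (g 0)) {a x : ℕ} (hx : x ≠ 9) :
    (labelF a x).sat v g G ↔ v a ∈ labelOf (G 2) (assignments (g 5) (v x) 0) := by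
  simp [labelF, sat, eval, eval_assignmentEntry, hg, succ, hx, labelOf, ← and_assoc,
    ← eq_seqCons_iff]

lemma sat_satF {c r A : ℕ} (hA : A ≠ 8) :
    (satF c r A).sat v g G ↔ satOf (G 0) (v c) (v r) (assignments (g A)) := by
  have hcode (h : ℕ → ℕ) : h = seqCons (v c) (seqCons (v r) (g A)) ↔
      (h 0 = v c ∧ h 1 = v r) ∧ ∀ n, h (n + 1 + 1) = g A n := by
    rw [eq_seqCons_iff, ← funext_iff, eq_seqCons_iff, and_assoc]
  simp [satF, sat, eval, succ, hA, satOf, ← and_assoc, ← hcode]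

lemma exists_assignments_eq {X : ℕ → ℕ → ℕ → ℕ} {Q : (ℕ → ℕ → ℕ → ℕ) → Prop} :
    (∃ h, assignments h = X ∧ Q (assignments h)) ↔ Q X := by
  simpa using assignments.surjective.exists (p := fun As => As = X ∧ Q As).symm

lemma sat_satShiftF (hg : IsPairing (g 0)) {c j : ℕ} (hj : j < 7) :
    (satShiftF c j).sat v g G ↔
      satOf (G 0) (v c) (v 1) fun x i => assignments (g 5) x (i + v j) := by
  have hj' : j ≠ 7 ∧ j ≠ 8 ∧ j ≠ 9 := by omega
  simp [satShiftF, sat, eval, eval_assignmentEntry, hg, sat_satF, hj', ← funext_iff,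
    exists_assignments_eq]

lemma sat_satUpdateF (hg : IsPairing (g 0)) {c x : ℕ} (hx : x < 7) :
    (satUpdateF c x).sat v g G ↔ satOf (G 0) (v c) (v x)
      (Function.update (assignments (g 5)) (v x) (rows (g 6))) := by
  have hx' : x ≠ 7 ∧ x ≠ 8 ∧ x ≠ 9 := by omega
  have hupdate (h : ℕ → ℕ) :
      assignments h = Function.update (assignments (g 5)) (v x) (rows (g 6)) ↔
        (∀ i k, assignments h (v x) i k = rows (g 6) i k) ∧
          ∀ y, y ≠ v x → ∀ i k, assignments h y i k = assignments (g 5) y i k := by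
    simp only [Function.eq_update_iff, ← funext_iff]
  rw [← exists_assignments_eq (Q := satOf (G 0) (v c) (v x))]
  simp [satUpdateF, sat, eval, eval_assignmentEntry, eval_pathEntry, hg, sat_satF, hx', hupdate,
    and_assoc]

lemma sat_startF (hg : IsPairing (g 0)) :
    startF.sat v g G ↔ rows (g 6) 0 = assignments (g 5) (v 1) 0 := by
  simp [startF, sat, eval, eval_assignmentEntry, eval_pathEntry, hg, funext_iff]

lemma sat_startsAtF (hg : IsPairing (g 0)) {f : ℕ} :
    (startsAtF f).sat v g G ↔ rows (g 6) 0 = g f := by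
  simp [startsAtF, sat, eval, eval_pathEntry, hg, funext_iff]

@[simp]
lemma sat_isCodeF {c : ℕ} : (isCodeF c).sat v g G ↔ (codedDecoration g G).isCode (v c) := Iff.rfl

lemma sat_freeF (hg : IsPairing (g 0)) {c : ℕ} :
    (freeF c).sat v g G ↔ (codedDecoration g G).free (v c) (v 2) := by
  simp [freeF, eval, eval_pair hg]

@[simp]
lemma sat_guardedF {c : ℕ} : (guardedF c).sat v g G ↔ (codedDecoration g G).guarded (v c) :=
  Iff.rfl

lemma sat_describesF (hg : IsPairing (g 0)) {truth free guarded : T2Form} :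
    (describesF truth free guarded).sat v g G ↔ (codedDecoration g G).Describes (v 0)
      (fun r As => truth.sat (Function.update v 1 r)
        (Function.update g 5 (assignments.symm As)) G)
      (fun y => free.sat (Function.update v 2 y) g G) (guarded.sat v g G) := by
  simp [describesF, sat, sat_freeF, hg, sat_satF, Decoration.Describes,
    assignments.surjective.forall]

lemma sat_tagF (hg : IsPairing (g 0)) {k : ℕ} {t : T2Term} :
    (tagF k t).sat v g G ↔ v 0 = Nat.pair k (t.eval v g G) := by
  simp [tagF, sat, eval, eval_pair hg]

lemma sat_clauseF (hg : IsPairing (g 0)) {v₀ : ℕ → ℕ} {succ : ∀ v, ∃ w, edgeOf (G 1) v w} :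
    clauseF.sat v g G ↔ (codedDecoration g G).Clause (codedTS G v₀ succ) (v 0) := by
  simp [clauseF, Decoration.Clause, sat, eval, hg, eval_pair, sat_tagF, sat_describesF, sat_satF,
    sat_labelF, sat_freeF, sat_satShiftF, sat_satUpdateF, sat_pathF, sat_startF, TS.IsPath,
    rows.surjective.exists, rows.surjective.forall]

lemma sat_succF (hg : IsPairing (g 0)) : succF.sat v g G ↔ ∀ v, ∃ w, edgeOf (G 1) v w := by
  have hpaths : succF.sat v g G ↔
      ∀ v, ∃ ρ : ℕ → ℕ → ℕ, (∀ i, edgeOf (G 1) (ρ i) (ρ (i + 1))) ∧ ρ 0 = v := by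
    simp [succF, sat, hg, sat_pathF, sat_startsAtF, rows.surjective.exists]
  rw [hpaths]
  constructor
  · intro h v
    obtain ⟨ρ, hρ, rfl⟩ := h v
    exact ⟨ρ 1, hρ 0⟩
  · exact fun succ v => (codedTS G v succ).exists_isPath v

lemma sat_constF (hg : IsPairing (g 0)) :
    constF.sat v g G ↔ assignments (g 5) = fun _ => rows (g 6) := by
  simp [constF, sat, eval, eval_assignmentEntry, eval_pathEntry, hg, funext_iff]

lemma sat_certifiesF (hg : IsPairing (g 0)) : certifiesF.sat v g G ↔
    ∃ succ, (codedDecoration g G).Certifies (codedTS G (g 4) succ) (v 0) := by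
  simp only [certifiesF, sat_conj, sat_succF hg]
  rw [← exists_prop]
  refine exists_congr fun succ => ?_
  simp [sat, eval, hg, sat_freeF, sat_pathF, sat_startsAtF, sat_constF, exists_assignments_eq,
    sat_satF, sat_clauseF (v₀ := g 4) (succ := succ), Decoration.Certifies, TS.IsPath,
    rows.surjective.forall]

end

theorem sigma21_ctlSatCodes : Sigma21 CTLSatCodes := by
  refine ⟨.exF 0 (pairingF ⋏ .exF 1 (.exF 2 (.exF 3 (.exF 4 certifiesF)))), fun n => ?_⟩
  rw [mem_ctlSatCodes_iff]
  simp only [sat, sat_conj, sat_pairingF]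
  constructor
  · rintro ⟨E, v₀, lab, succ, ⟨isCode, sat, free, guarded⟩, hD⟩
    obtain ⟨P, hP⟩ := exists_isPairing
    obtain ⟨isCode, rfl⟩ := exists_ne_zero_eq isCode
    obtain ⟨H₀, rfl⟩ := exists_satOf_eq sat
    obtain ⟨free, rfl⟩ := exists_ne_zero_pair_eq free
    obtain ⟨guarded, rfl⟩ := exists_ne_zero_eq guarded
    obtain ⟨H₁, rfl⟩ := exists_edgeOf_eq E
    obtain ⟨H₂, rfl⟩ := exists_labelOf_eq lab
    refine ⟨fun | 0 => H₀ | 1 => H₁ | _ => H₂, P, hP, isCode, free, guarded, v₀, ?_⟩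
    exact (sat_certifiesF (by exact hP)).2 ⟨succ, hD⟩
  · rintro ⟨G, P, hP, isCode, free, guarded, v₀, h⟩
    obtain ⟨succ, hD⟩ := (sat_certifiesF (by exact hP)).1 h
    exact ⟨_, _, _, succ, _, hD⟩

end Certificate

/-! ### First-order logic over sets of natural numbers -/

/-- A family of ternary relations between sets of natural numbers. -/
abbrev SetRelations : Type := ℕ → Set ℕ → Set ℕ → Set ℕ → Prop

/-- First-order formulas over the sets of natural numbers, in de Bruijn notation, with symbols for
a family of ternary relations. -/
inductive SetForm : Type where
  | rel : ℕ → ℕ → ℕ → ℕ → SetForm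
  | sub : ℕ → ℕ → SetForm
  | suc : ℕ → ℕ → SetForm
  | lt : ℕ → ℕ → SetForm
  | zero : ℕ → SetForm
  | neg : SetForm → SetForm
  | disj : SetForm → SetForm → SetForm
  | ex : SetForm → SetForm

namespace SetForm

/-- The semantics of formulas over sets. On singletons the atoms `sub`, `suc`, `lt` and `zero`
express `n = m`, `n + 1 = m`, `n < m` and `n = 0`. -/
def sat (R : SetRelations) : SetForm → (ℕ → Set ℕ) → Prop
  | .rel j x y z, σ => R j (σ x) (σ y) (σ z)
  | .sub x y, σ => σ x ⊆ σ y
  | .suc x y, σ => ∃ n ∈ σ x, n + 1 ∈ σ y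
  | .lt x y, σ => ∃ n ∈ σ x, ∃ m ∈ σ y, n < m
  | .zero x, σ => 0 ∈ σ x
  | .neg φ, σ => ¬ φ.sat R σ
  | .disj φ ψ, σ => φ.sat R σ ∨ ψ.sat R σ
  | .ex φ, σ => ∃ X, φ.sat R (seqCons X σ)

/-- Conjunction. -/
def conj (φ ψ : SetForm) : SetForm := .neg (.disj (.neg φ) (.neg ψ))

/-- Implication. -/
def imp (φ ψ : SetForm) : SetForm := .disj (.neg φ) ψ

/-- Equivalence. -/
def iff (φ ψ : SetForm) : SetForm := conj (imp φ ψ) (imp ψ φ)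

/-- The predicate of being a singleton. Nonemptiness says that some set is not a superset. -/
def sing (x : ℕ) : SetForm := conj (.ex (.neg (.sub (x + 1) 0))) (.neg (.lt x x))

/-- Existential quantification over numbers, represented by singletons. -/
def exN (φ : SetForm) : SetForm := .ex (conj (sing 0) φ)

/-- Universal quantification over numbers, represented by singletons. -/
def allN (φ : SetForm) : SetForm := .neg (exN (.neg φ))

variable {R : SetRelations} {φ ψ : SetForm} {σ : ℕ → Set ℕ}

@[simp]
lemma sat_conj : (conj φ ψ).sat R σ ↔ φ.sat R σ ∧ ψ.sat R σ := by simp [conj, sat]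

@[simp]
lemma sat_imp : (imp φ ψ).sat R σ ↔ (φ.sat R σ → ψ.sat R σ) := by
  simp [imp, sat, imp_iff_not_or]

@[simp]
lemma sat_iff : (iff φ ψ).sat R σ ↔ (φ.sat R σ ↔ ψ.sat R σ) := by simp [iff, iff_def]

@[simp]
lemma sat_sing {x : ℕ} : (sing x).sat R σ ↔ ∃ n, σ x = {n} := by
  have hnonempty : (∃ Y, ¬ σ x ⊆ Y) ↔ (σ x).Nonempty :=
    ⟨fun ⟨_, hY⟩ => (Set.nonempty_of_not_subset hY).mono Set.sdiff_subset,
      fun h => ⟨∅, by simpa using h.ne_empty⟩⟩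
  have hsubsingleton : (¬ ∃ n ∈ σ x, ∃ m ∈ σ x, n < m) ↔ (σ x).Subsingleton := by
    refine ⟨fun h n hn m hm => ?_, fun h ⟨n, hn, m, hm, hlt⟩ => hlt.ne (h hn hm)⟩
    exact le_antisymm (not_lt.1 fun hlt => h ⟨m, hm, n, hn, hlt⟩)
      (not_lt.1 fun hlt => h ⟨n, hn, m, hm, hlt⟩)
  rw [Set.exists_eq_singleton_iff_nonempty_subsingleton, ← hnonempty, ← hsubsingleton]
  exact sat_conj

@[simp]
lemma sat_exN : (exN φ).sat R σ ↔ ∃ n, φ.sat R (seqCons {n} σ) := by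
  simp only [exN, sat, sat_conj, sat_sing]
  exact ⟨fun ⟨_, ⟨n, hn⟩, hφ⟩ => ⟨n, hn ▸ hφ⟩, fun ⟨n, hφ⟩ => ⟨{n}, ⟨n, rfl⟩, hφ⟩⟩

@[simp]
lemma sat_allN : (allN φ).sat R σ ↔ ∀ n, φ.sat R (seqCons {n} σ) := by simp [allN, sat]

end SetForm

/-! ### Translation of formulas over sets to HyperCTL* -/

namespace CTL

/-- Conjunction. -/
def conj {AP : Type} (φ ψ : CTL AP) : CTL AP := .neg (.disj (.neg φ) (.neg ψ))

/-- Implication. -/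
def imp {AP : Type} (φ ψ : CTL AP) : CTL AP := .disj (.neg φ) ψ

/-- Equivalence. -/
def iff {AP : Type} (φ ψ : CTL AP) : CTL AP := conj (imp φ ψ) (imp ψ φ)

/-- The temporal operator `F`. -/
def eventually (φ : CTL ℕ) : CTL ℕ := .untl (.taut 0) φ

/-- The temporal operator `G`. -/
def always (φ : CTL ℕ) : CTL ℕ := .neg (eventually (.neg φ))

section

variable {AP : Type} {T : TS AP} {φ ψ : CTL AP} {As : ℕ → ℕ → T.V} {r : ℕ}

@[simp]
lemma sat_conj : (conj φ ψ).sat T As r ↔ φ.sat T As r ∧ ψ.sat T As r := by simp [conj, sat]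

@[simp]
lemma sat_imp : (imp φ ψ).sat T As r ↔ (φ.sat T As r → ψ.sat T As r) := by
  simp [imp, sat, imp_iff_not_or]

@[simp]
lemma sat_iff : (iff φ ψ).sat T As r ↔ (φ.sat T As r ↔ ψ.sat T As r) := by simp [iff, iff_def]

end

variable {S : TS ℕ} {φ : CTL ℕ} {As : ℕ → ℕ → S.V} {r : ℕ}

@[simp]
lemma sat_eventually :
    (eventually φ).sat S As r ↔ ∃ j, φ.sat S (fun x i => As x (i + j)) r := by
  simp [eventually, sat]

@[simp]
lemma sat_always : (always φ).sat S As r ↔ ∀ j, φ.sat S (fun x i => As x (i + j)) r := by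
  simp [always, sat]

end CTL

/-- Translation to HyperCTL*. The set with de Bruijn index `i` becomes the labels `0` on the path
`e i`, shifted by one since all paths share their first vertex. A tuple of the relation `j` becomes
the labels `1`, `2` and `3` on a path marked with `5 + j`. Path variables from `d` on are fresh. -/
def SetForm.toCTL : SetForm → (ℕ → ℕ) → ℕ → CTL ℕ
  | .rel j x y z, e, d => .ex d <| .conj (.next (.atom (5 + j) d)) <| .next <| .always <|
      .conj (.iff (.atom 1 d) (.atom 0 (e x))) <|
      .conj (.iff (.atom 2 d) (.atom 0 (e y))) (.iff (.atom 3 d) (.atom 0 (e z)))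
  | .sub x y, e, _ => .next (.always (.imp (.atom 0 (e x)) (.atom 0 (e y))))
  | .suc x y, e, _ => .next (.eventually (.conj (.atom 0 (e x)) (.next (.atom 0 (e y)))))
  | .lt x y, e, _ =>
      .next (.eventually (.conj (.atom 0 (e x)) (.next (.eventually (.atom 0 (e y))))))
  | .zero x, e, _ => .next (.atom 0 (e x))
  | .neg φ, e, d => .neg (φ.toCTL e d)
  | .disj φ ψ, e, d => .disj (φ.toCTL e d) (ψ.toCTL e d)
  | .ex φ, e, d => .ex d (φ.toCTL (seqCons d e) (d + 1))

/-- The set of natural numbers represented by a path. -/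
def pathSet (S : TS ℕ) (ρ : ℕ → S.V) : Set ℕ := {n | 0 ∈ S.lab (ρ (n + 1))}

namespace TS

/-- The ternary relations between sets represented by the paths of `S`. -/
def rel (S : TS ℕ) : SetRelations := fun j X Y Z =>
  ∃ ρ, S.IsPath ρ ∧ ρ 0 = S.vI ∧ 5 + j ∈ S.lab (ρ 1) ∧ ∀ n,
    (1 ∈ S.lab (ρ (n + 1)) ↔ n ∈ X) ∧ (2 ∈ S.lab (ρ (n + 1)) ↔ n ∈ Y) ∧
      (3 ∈ S.lab (ρ (n + 1)) ↔ n ∈ Z)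

/-- Every set of natural numbers is represented by a path. -/
def RealizesSets (S : TS ℕ) : Prop := ∀ X, ∃ ρ, S.IsPath ρ ∧ ρ 0 = S.vI ∧ pathSet S ρ = X

end TS

lemma exists_mem_gt_iff {n : ℕ} {X : Set ℕ} : (∃ m ∈ X, n < m) ↔ ∃ k, k + (n + 1) ∈ X := by
  constructor
  · rintro ⟨m, hm, hlt⟩
    exact ⟨m - (n + 1), by rwa [Nat.sub_add_cancel hlt]⟩
  · exact fun ⟨k, hk⟩ => ⟨_, hk, by omega⟩

lemma seqCons_lt_succ {e : ℕ → ℕ} {d : ℕ} (he : ∀ i, e i < d) : ∀ i, seqCons d e i < d + 1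
  | 0 => d.lt_succ_self
  | i + 1 => (he i).trans d.lt_succ_self

lemma SetForm.sat_toCTL {S : TS ℕ} (hS : S.RealizesSets) {φ : SetForm} {e : ℕ → ℕ} {d : ℕ}
    (he : ∀ i, e i < d) {As : ℕ → ℕ → S.V} {r : ℕ} (hr : As r 0 = S.vI) :
    (φ.toCTL e d).sat S As r ↔ φ.sat S.rel fun i => pathSet S (As (e i)) := by
  induction φ generalizing e d As r with
  | rel j x y z =>
    simp [toCTL, CTL.sat, sat, TS.rel, hr, pathSet, (he _).ne]
  | sub x y => simp [toCTL, CTL.sat, sat, pathSet, Set.subset_def]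
  | suc x y => simp [toCTL, CTL.sat, sat, pathSet, add_comm, add_left_comm]
  | lt x y =>
    simp only [sat, exists_mem_gt_iff]
    simp [toCTL, CTL.sat, pathSet, add_comm, add_left_comm]
  | zero x => simp [toCTL, CTL.sat, sat, pathSet]
  | neg φ ih => simp only [toCTL, CTL.sat, sat, ih he hr]
  | disj φ ψ ihφ ihψ => simp only [toCTL, CTL.sat, sat, ihφ he hr, ihψ he hr]
  | ex φ ih =>
    have henv (ρ : ℕ → S.V) : (fun i => pathSet S (Function.update As d ρ (seqCons d e i))) =
        seqCons (pathSet S ρ) fun i => pathSet S (As (e i)) :=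
      eq_seqCons_iff.2 ⟨by simp [seqCons], fun i => by simp [seqCons, (he i).ne]⟩
    have hbody (ρ : ℕ → S.V) (hρ : ρ 0 = S.vI) :=
      ih (seqCons_lt_succ he) (As := Function.update As d ρ) (r := d) (by simpa using hρ)
    simp only [toCTL, CTL.sat, sat, hr]
    constructor
    · rintro ⟨ρ, -, hstart, hφ⟩
      exact ⟨pathSet S ρ, by rwa [hbody ρ hstart, henv] at hφ⟩
    · rintro ⟨X, hφ⟩
      obtain ⟨ρ, hpath, hstart, rfl⟩ := hS X
      exact ⟨ρ, hpath, hstart, by rwa [hbody ρ hstart, henv]⟩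


/-! ### Transition systems in which every set is a path -/

namespace TS

lemma isPath_seqCons {AP : Type} {S : TS AP} {v : S.V} {ρ : ℕ → S.V} :
    S.IsPath (seqCons v ρ) ↔ S.E v (ρ 0) ∧ S.IsPath ρ :=
  ⟨fun h => ⟨h 0, fun i => h (i + 1)⟩, fun h i => i.casesOn h.1 h.2⟩

lemma exists_isPath_and_one_iff {AP : Type} {S : TS AP} {v : S.V} {Q : S.V → Prop} :
    (∃ ρ, S.IsPath ρ ∧ ρ 0 = v ∧ Q (ρ 1)) ↔ ∃ w, S.E v w ∧ Q w := by
  constructor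
  · rintro ⟨ρ, hρ, rfl, hQ⟩
    exact ⟨ρ 1, hρ 0, hQ⟩
  · rintro ⟨w, hE, hQ⟩
    obtain ⟨ρ, hρ, rfl⟩ := S.exists_isPath w
    exact ⟨seqCons v ρ, isPath_seqCons.2 ⟨hE, hρ⟩, rfl, hQ⟩

lemma exists_isPath_through_iff {AP : Type} {S : TS AP} {v w : S.V} :
    (∃ ρ, S.IsPath ρ ∧ ρ 0 = v ∧ ∃ j, ρ j = w) ↔ Relation.ReflTransGen S.E v w := by
  constructor
  · rintro ⟨ρ, hρ, rfl, j, rfl⟩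
    induction j with
    | zero => exact .refl
    | succ j ih => exact ih.tail (hρ j)
  · intro h
    induction h using Relation.ReflTransGen.head_induction_on with
    | refl =>
      obtain ⟨ρ, hρ, hstart⟩ := S.exists_isPath w
      exact ⟨ρ, hρ, hstart, 0, hstart⟩
    | head hE _ ih =>
      obtain ⟨ρ, hρ, rfl, j, hj⟩ := ih
      exact ⟨seqCons _ ρ, isPath_seqCons.2 ⟨hE, hρ⟩, rfl, j + 1, hj⟩

lemma forall_isPath_iff {AP : Type} {S : TS AP} {v : S.V} {Q : S.V → Prop} :
    (∀ ρ, S.IsPath ρ → ρ 0 = v → ∀ j, Q (ρ j)) ↔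
      ∀ w, Relation.ReflTransGen S.E v w → Q w := by
  simp only [← exists_isPath_through_iff]
  exact ⟨fun h w ⟨ρ, hρ, hstart, j, hj⟩ => hj ▸ h ρ hρ hstart j,
    fun h ρ hρ hstart j => h _ ⟨ρ, hρ, hstart, j, rfl⟩⟩

/-- If `v` is labelled by `4`, it has successors labelled by `4` both with and without label `0`. -/
def Splits (S : TS ℕ) (v : S.V) : Prop :=
  4 ∈ S.lab v → ∀ b : Prop, ∃ w, S.E v w ∧ 4 ∈ S.lab w ∧ (0 ∈ S.lab w ↔ b)

/-- The property that the vertices labelled by `4` contain a full binary tree, whose branching is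
witnessed by the label `0`. -/
def Branching (S : TS ℕ) : Prop :=
  4 ∈ S.lab S.vI ∧ ∀ v, Relation.ReflTransGen S.E S.vI v → S.Splits v

lemma Branching.realizesSets {S : TS ℕ} (hS : S.Branching) : S.RealizesSets := by
  intro X
  let Inner : Type := {v : S.V // Relation.ReflTransGen S.E S.vI v ∧ 4 ∈ S.lab v}
  have hnext (v : Inner) (n : ℕ) : ∃ w : Inner, S.E v w ∧ (0 ∈ S.lab w ↔ n ∈ X) := by
    obtain ⟨w, hE, h4, h0⟩ := hS.2 v v.2.1 v.2.2 (n ∈ X)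
    exact ⟨⟨w, v.2.1.tail hE, h4⟩, hE, h0⟩
  choose next hE hX using hnext
  let ρ : ℕ → Inner := fun n => n.rec ⟨S.vI, .refl, hS.1⟩ fun n v => next v n
  exact ⟨fun n => (ρ n).1, fun n => hE (ρ n) n, rfl, Set.ext fun n => hX (ρ n) n⟩

end TS

namespace CTL

/-- The formula expressing `TS.Splits` at the first vertex of path `0`. -/
def splits : CTL ℕ :=
  .imp (.atom 4 0) <| .conj (.ex 0 (.next (.conj (.atom 4 0) (.atom 0 0))))
    (.ex 0 (.next (.conj (.atom 4 0) (.neg (.atom 0 0)))))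

/-- The formula expressing `TS.Branching`. -/
def branching : CTL ℕ := .ex 0 <| .conj (.atom 4 0) <| .all 0 <| .always splits

variable {S : TS ℕ} {As : ℕ → ℕ → S.V}

lemma sat_splits : splits.sat S As 0 ↔ S.Splits (As 0 0) := by
  have hnext (b : Prop) := TS.exists_isPath_and_one_iff (S := S) (v := As 0 0)
    (Q := fun w => 4 ∈ S.lab w ∧ (0 ∈ S.lab w ↔ b))
  simp [splits, TS.Splits, sat, Prop.forall, ← hnext]

lemma sat_branching {r : ℕ} (hr : As r 0 = S.vI) : branching.sat S As r ↔ S.Branching := by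
  obtain ⟨ρ, hρ, hstart⟩ := S.exists_isPath S.vI
  simp only [branching, TS.Branching, ← TS.forall_isPath_iff, sat, sat_conj, sat_always,
    sat_splits, Function.update_self, hr, zero_add]
  exact ⟨fun ⟨_, _, hπ, h4, h⟩ => ⟨hπ ▸ h4, hπ ▸ h⟩,
    fun ⟨h4, h⟩ => ⟨ρ, hρ, hstart, hstart.symm ▸ h4, hstart.symm ▸ h⟩⟩

end CTL

/-- The vertices of a system with a full binary tree and one path for each tuple of the family. -/
inductive ChainVertex : Type where
  | root : ChainVertex
  | bit : Prop → ChainVertex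
  | chain : ℕ → Set ℕ → Set ℕ → Set ℕ → ℕ → ChainVertex

namespace SetRelations

/-- A system representing the relations `R`: from the root start a full binary tree and, for each
tuple of the relation `j`, a single path that spells out the tuple. -/
def system (R : SetRelations) : TS ℕ where
  V := ChainVertex
  E
    | .root, .bit _ => True
    | .root, .chain j X Y Z i => R j X Y Z ∧ i = 0
    | .bit _, .bit _ => True
    | .chain j X Y Z i, w => w = .chain j X Y Z (i + 1)
    | _, _ => False
  vI := .root
  lab
    | .root => {4}
    | .bit b => {a | a = 4 ∨ a = 0 ∧ b}
    | .chain j X Y Z i => {a | a = 1 ∧ i ∈ X ∨ a = 2 ∧ i ∈ Y ∨ a = 3 ∧ i ∈ Z ∨ a = 5 + j}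
  succ
    | .root => ⟨.bit True, trivial⟩
    | .bit _ => ⟨.bit True, trivial⟩
    | .chain _ _ _ _ _ => ⟨_, rfl⟩

variable {R : SetRelations}

lemma branching_system (R : SetRelations) : R.system.Branching := by
  refine ⟨rfl, fun v _ hv b => ?_⟩
  cases v with
  | root => exact ⟨.bit b, trivial, by simp [system]⟩
  | bit _ => exact ⟨.bit b, trivial, by simp [system]⟩
  | chain j X Y Z i => simp [system] at hv; omega

lemma eq_chain_of_isPath {ρ : ℕ → ChainVertex} (hρ : R.system.IsPath ρ) {j : ℕ} {X Y Z : Set ℕ}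
    (h : ρ 1 = .chain j X Y Z 0) (n : ℕ) : ρ (n + 1) = .chain j X Y Z n := by
  induction n with
  | zero => exact h
  | succ n ih =>
    have hE := hρ (n + 1)
    rw [ih] at hE
    exact hE

lemma isPath_chain {j : ℕ} {X Y Z : Set ℕ} (h : R j X Y Z) :
    R.system.IsPath (seqCons .root (.chain j X Y Z)) :=
  TS.isPath_seqCons.2 ⟨⟨h, rfl⟩, fun _ => rfl⟩

lemma mem_lab_chain {j : ℕ} {X Y Z : Set ℕ} {n : ℕ} :
    (1 ∈ R.system.lab (.chain j X Y Z n) ↔ n ∈ X) ∧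
      (2 ∈ R.system.lab (.chain j X Y Z n) ↔ n ∈ Y) ∧
      (3 ∈ R.system.lab (.chain j X Y Z n) ↔ n ∈ Z) := by
  have h1 : 1 ≠ 5 + j := by omega
  have h2 : 2 ≠ 5 + j := by omega
  have h3 : 3 ≠ 5 + j := by omega
  simp [system, h1, h2, h3]

lemma marker_mem_lab_chain {j k : ℕ} {X Y Z : Set ℕ} {n : ℕ} :
    5 + j ∈ R.system.lab (.chain k X Y Z n) ↔ j = k := by
  simp [system]
  omega

lemma rel_system (R : SetRelations) : R.system.rel = R := by
  funext j X Y Z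
  refine propext ⟨?_, fun h => ⟨_, isPath_chain h, rfl, ?_, fun _ => mem_lab_chain⟩⟩
  · rintro ⟨ρ, hρ, hstart, hj, hXYZ⟩
    have hE : R.system.E (ρ 0) (ρ 1) := hρ 0
    cases hone : ρ 1 <;> rw [hone] at hj <;> rw [hstart, hone] at hE
    case root => exact hE.elim
    case bit b => simp [system] at hj; omega
    case chain k X' Y' Z' i =>
      obtain ⟨h, rfl⟩ := hE
      obtain rfl := marker_mem_lab_chain.1 hj
      simp only [eq_chain_of_isPath hρ hone, mem_lab_chain] at hXYZ
      rwa [Set.ext fun n => (hXYZ n).1, Set.ext fun n => (hXYZ n).2.1,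
        Set.ext fun n => (hXYZ n).2.2] at h
  · exact marker_mem_lab_chain.2 rfl

end SetRelations

/-! ### Third-order arithmetic in the language of sets -/

/-- The set of the coded pairs `(n, f n)`. -/
def graph (f : ℕ → ℕ) : Set ℕ := Set.range fun n => polyPair n (f n)

@[simp]
lemma polyPair_mem_graph {f : ℕ → ℕ} {n m : ℕ} : polyPair n m ∈ graph f ↔ f n = m := by
  simp [graph, polyPair_inj]

lemma graph_injective : Function.Injective graph := fun f g h => funext fun n => by
  rw [← polyPair_mem_graph, h, polyPair_mem_graph]

lemma eq_graph_iff {A : Set ℕ} {f : ℕ → ℕ} : A = graph f ↔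
    (∀ k ∈ A, ∃ n m, polyPair n m = k) ∧ ∀ n m, polyPair n m ∈ A ↔ f n = m := by
  constructor
  · rintro rfl
    exact ⟨fun k ⟨n, hn⟩ => ⟨n, f n, hn⟩, fun n m => polyPair_mem_graph⟩
  · rintro ⟨hpair, hf⟩
    ext k
    constructor
    · intro hk
      obtain ⟨n, m, rfl⟩ := hpair k hk
      exact polyPair_mem_graph.2 ((hf n m).1 hk)
    · rintro ⟨n, rfl⟩
      exact (hf n (f n)).2 rfl

namespace SetRelations

variable {R : SetRelations}

/-- The relations `0` and `1` are addition and multiplication. -/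
def IsArithmetic (R : SetRelations) : Prop :=
  ∀ n m k, (R 0 {n} {m} {k} ↔ n + m = k) ∧ (R 1 {n} {m} {k} ↔ n * m = k)

/-- The type-2 object coded by the relation `2 + F`. It takes the least of all values that the
relation permits, so that no formula has to require that the relation is functional. -/
noncomputable def typeTwo (R : SetRelations) (F : ℕ) (f : ℕ → ℕ) : ℕ :=
  sInf {m | R (2 + F) (graph f) {m} {m}}

/-- Addition, multiplication, and the graphs of the type-2 objects `G`. -/
def ofTypeTwo (G : ℕ → (ℕ → ℕ) → ℕ) : SetRelations
  | 0, X, Y, Z => ∃ n m, X = {n} ∧ Y = {m} ∧ Z = {n + m}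
  | 1, X, Y, Z => ∃ n m, X = {n} ∧ Y = {m} ∧ Z = {n * m}
  | F + 2, X, Y, _ => ∃ f, X = graph f ∧ Y = {G F f}

lemma isArithmetic_ofTypeTwo (G : ℕ → (ℕ → ℕ) → ℕ) : (ofTypeTwo G).IsArithmetic := by
  simp [IsArithmetic, ofTypeTwo, eq_comm]

lemma typeTwo_ofTypeTwo (G : ℕ → (ℕ → ℕ) → ℕ) : (ofTypeTwo G).typeTwo = G := by
  funext F f
  simp [typeTwo, add_comm 2 F, ofTypeTwo, graph_injective.eq_iff]

lemma isArithmetic_iff : R.IsArithmetic ↔ ∀ n m k,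
    (R 0 {n} {m} {k} ↔ (m = 0 ∧ n = k) ∨ ∃ m' k', m' + 1 = m ∧ k' + 1 = k ∧ R 0 {n} {m'} {k'}) ∧
    (R 1 {n} {m} {k} ↔ (m = 0 ∧ k = 0) ∨ ∃ m' k', m' + 1 = m ∧ R 1 {n} {m'} {k'} ∧
      R 0 {k'} {n} {k}) := by
  constructor
  · intro h n m k
    simp only [h _ _ _]
    cases m <;> cases k <;> simp [mul_add_one, ← add_assoc]
  · intro h
    have hadd (n m : ℕ) : ∀ k, R 0 {n} {m} {k} ↔ n + m = k := by
      induction m with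
      | zero => exact fun k => (h n 0 k).1.trans (by simp)
      | succ m ih => exact fun k => (h n (m + 1) k).1.trans (by simp [ih, ← add_assoc])
    have hmul (n m : ℕ) : ∀ k, R 1 {n} {m} {k} ↔ n * m = k := by
      induction m with
      | zero => exact fun k => (h n 0 k).2.trans (by simp [eq_comm])
      | succ m ih => exact fun k => (h n (m + 1) k).2.trans (by simp [ih, hadd, mul_add_one])
    exact fun n m k => ⟨hadd n m k, hmul n m k⟩

end SetRelations

lemma sInf_eq_iff {s : Set ℕ} {n : ℕ} :
    sInf s = n ↔ (n ∈ s ∧ ∀ m ∈ s, ¬ m < n) ∨ n = 0 ∧ ∀ m, m ∉ s := by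
  rcases s.eq_empty_or_nonempty with rfl | hs
  · simp [eq_comm]
  · rw [or_iff_left fun h => hs.elim h.2]
    exact ⟨fun h => h ▸ ⟨Nat.sInf_mem hs, fun m hm => not_lt.2 (Nat.sInf_le hm)⟩,
      fun ⟨hn, hmin⟩ => le_antisymm (Nat.sInf_le hn) (not_lt.1 (hmin _ (Nat.sInf_mem hs)))⟩

namespace SetForm

/-- The pair of the numbers `x` and `y` is the number `z`. -/
def pair (x y z : ℕ) : SetForm :=
  exN (conj (.rel 0 (x + 1) (y + 1) 0) (exN (conj (.rel 1 1 1 0) (.rel 0 0 (x + 2) (z + 2)))))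

/-- The pair of the numbers `x` and `y` belongs to the set `A`. -/
def memPair (x y A : ℕ) : SetForm := exN (conj (pair (x + 1) (y + 1) 0) (.sub 0 (A + 1)))

/-- The set `A` is the graph of a function. -/
def isGraph (A : ℕ) : SetForm :=
  conj (allN (imp (.sub 0 (A + 1)) (exN (exN (pair 1 0 2)))))
    (allN (exN (allN (iff (memPair 2 0 (A + 3)) (.sub 1 0)))))

/-- Existential quantification over functions, represented by their graphs. -/
def exFun (φ : SetForm) : SetForm := .ex (conj (isGraph 0) φ)

/-- Universal quantification over functions, represented by their graphs. -/
def allFun (φ : SetForm) : SetForm := .neg (exFun (.neg φ))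

/-- The set `A` is the graph of the constant function `0`. -/
def isZeroGraph (A : ℕ) : SetForm :=
  conj (isGraph A) (allN (exN (conj (.zero 0) (memPair 1 0 (A + 2)))))

/-- The formula expressing `SetRelations.IsArithmetic` by the recursion equations. -/
def arithmetic : SetForm :=
  allN <| allN <| allN <| conj
    (iff (.rel 0 2 1 0) <| .disj (conj (.zero 1) (.sub 2 0)) <|
      exN <| exN <| conj (.suc 1 3) <| conj (.suc 0 2) (.rel 0 4 1 0))
    (iff (.rel 1 2 1 0) <| .disj (conj (.zero 1) (.zero 0)) <|
      exN <| exN <| conj (.suc 1 3) <| conj (.rel 1 4 1 0) (.rel 0 0 4 2))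

variable {R : SetRelations} {σ : ℕ → Set ℕ}

lemma sat_arithmetic : arithmetic.sat R σ ↔ R.IsArithmetic := by
  rw [SetRelations.isArithmetic_iff]
  simp [arithmetic, sat, seqCons, eq_comm]

lemma sat_pair (hR : R.IsArithmetic) {x y z n m k : ℕ} (hx : σ x = {n}) (hy : σ y = {m})
    (hz : σ z = {k}) : (pair x y z).sat R σ ↔ polyPair n m = k := by
  simp [pair, sat, seqCons, hx, hy, hz, hR _ _ _, polyPair]

lemma sat_memPair (hR : R.IsArithmetic) {x y A n m : ℕ} (hx : σ x = {n}) (hy : σ y = {m}) :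
    (memPair x y A).sat R σ ↔ polyPair n m ∈ σ A := by
  have hpair (k : ℕ) : (pair (x + 1) (y + 1) 0).sat R (seqCons {k} σ) ↔ polyPair n m = k :=
    sat_pair hR hx hy rfl
  simp [memPair, hpair, sat, seqCons]

lemma sat_isGraph (hR : R.IsArithmetic) {A : ℕ} :
    (isGraph A).sat R σ ↔ ∃ f, σ A = graph f := by
  have hpair (k n m : ℕ) : (pair 1 0 2).sat R (seqCons {m} (seqCons {n} (seqCons {k} σ))) ↔
      polyPair n m = k := sat_pair hR rfl rfl rfl
  have hmem (n k m : ℕ) : (memPair 2 0 (A + 3)).sat R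
      (seqCons {m} (seqCons {k} (seqCons {n} σ))) ↔ polyPair n m ∈ σ A := sat_memPair hR rfl rfl
  simp only [isGraph, sat_conj, sat_allN, sat_imp, sat_exN, sat_iff, hpair, hmem, sat, seqCons,
    Set.singleton_subset_iff, Set.mem_singleton_iff, Classical.skolem, eq_graph_iff,
    exists_and_left]

lemma sat_isZeroGraph (hR : R.IsArithmetic) {A : ℕ} :
    (isZeroGraph A).sat R σ ↔ σ A = graph fun _ => 0 := by
  have hmem (n m : ℕ) : (memPair 1 0 (A + 2)).sat R (seqCons {m} (seqCons {n} σ)) ↔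
      polyPair n m ∈ σ A := sat_memPair hR rfl rfl
  simp only [isZeroGraph, sat_conj, sat_isGraph hR, sat_allN, sat_exN, hmem, sat, seqCons,
    Set.mem_singleton_iff, exists_eq_left']
  constructor
  · rintro ⟨⟨f, hf⟩, hzero⟩
    rw [hf, graph_injective.eq_iff]
    exact funext fun n => polyPair_mem_graph.1 (hf ▸ hzero n)
  · exact fun h => ⟨⟨_, h⟩, fun n => by simp [h]⟩

lemma sat_exFun (hR : R.IsArithmetic) {φ : SetForm} :
    (exFun φ).sat R σ ↔ ∃ f, φ.sat R (seqCons (graph f) σ) := by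
  simp [exFun, sat, sat_isGraph hR, seqCons]

lemma sat_allFun (hR : R.IsArithmetic) {φ : SetForm} :
    (allFun φ).sat R σ ↔ ∀ f, φ.sat R (seqCons (graph f) σ) := by
  simp [allFun, sat, sat_exFun hR]

/-- The set variables `e y` and `e' f` hold the values of the number variable `y` and of the
function variable `f`. -/
structure Represents (σ : ℕ → Set ℕ) (e e' v : ℕ → ℕ) (g : ℕ → ℕ → ℕ) : Prop where
  num : ∀ y, σ (e y) = {v y}
  graph : ∀ f, σ (e' f) = graph (g f)

namespace Represents

variable {e e' v : ℕ → ℕ} {g : ℕ → ℕ → ℕ}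

lemma shift (h : Represents σ e e' v g) (X : Set ℕ) :
    Represents (seqCons X σ) (fun y => e y + 1) (fun f => e' f + 1) v g :=
  ⟨h.num, h.graph⟩

lemma updateNum (h : Represents σ e e' v g) (x n : ℕ) :
    Represents (seqCons {n} σ) (Function.update (fun y => e y + 1) x 0) (fun f => e' f + 1)
      (Function.update v x n) g where
  num y := by
    rcases eq_or_ne y x with rfl | hy
    · simp [seqCons]
    · simpa [seqCons, hy] using h.num y
  graph := h.graph

lemma updateFun (h : Represents σ e e' v g) (x : ℕ) (f : ℕ → ℕ) :
    Represents (seqCons (_root_.graph f) σ) (fun y => e y + 1)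
      (Function.update (fun f => e' f + 1) x 0) v (Function.update g x f) where
  num := h.num
  graph y := by
    rcases eq_or_ne y x with rfl | hy
    · simp [seqCons]
    · simpa [seqCons, hy] using h.graph y

end Represents

end SetForm

/-- The formula saying that the value of a term is the number `z`, when the number and function
variables are held by the set variables `e` and `e'`. -/
def T2Term.toSetForm : T2Term → (ℕ → ℕ) → (ℕ → ℕ) → ℕ → SetForm
  | .var y, e, _, z => .sub z (e y)
  | .zero, _, _, z => .zero z
  | .one, _, _, z => .exN (.conj (.zero 0) (.suc 0 (z + 1)))
  | .add s t, e, e', z => .exN <| .conj (s.toSetForm (e · + 1) (e' · + 1) 0) <|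
      .exN <| .conj (t.toSetForm (e · + 2) (e' · + 2) 0) (.rel 0 1 0 (z + 2))
  | .mul s t, e, e', z => .exN <| .conj (s.toSetForm (e · + 1) (e' · + 1) 0) <|
      .exN <| .conj (t.toSetForm (e · + 2) (e' · + 2) 0) (.rel 1 1 0 (z + 2))
  | .app1 f t, e, e', z =>
      .exN <| .conj (t.toSetForm (e · + 1) (e' · + 1) 0) (.memPair 0 (z + 1) (e' f + 1))
  | .app2 F f, _, e', z => .disj
      (.conj (.rel (2 + F) (e' f) z z)
        (.allN (.imp (.rel (2 + F) (e' f + 1) 0 0) (.neg (.lt 0 (z + 1))))))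
      (.conj (.zero z) (.allN (.neg (.rel (2 + F) (e' f + 1) 0 0))))

open SetForm in
lemma T2Term.sat_toSetForm {R : SetRelations} (hR : R.IsArithmetic) {t : T2Term}
    {e e' v : ℕ → ℕ} {g : ℕ → ℕ → ℕ} {σ : ℕ → Set ℕ} (h : Represents σ e e' v g) {z n : ℕ}
    (hz : σ z = {n}) : (t.toSetForm e e' z).sat R σ ↔ t.eval v g R.typeTwo = n := by
  induction t generalizing e e' σ z n with
  | var y => simp [toSetForm, sat, eval, hz, h.num, eq_comm]
  | zero => simp [toSetForm, sat, eval, hz]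
  | one => simp [toSetForm, sat, eval, seqCons, hz]
  | add s t ihs iht =>
    have hs (a : ℕ) := ihs (h.shift {a}) (z := 0) (n := a) rfl
    have ht (a b : ℕ) := iht ((h.shift {a}).shift {b}) (z := 0) (n := b) rfl
    simp [toSetForm, sat, eval, seqCons, hz, hs, ht, hR _ _ _]
  | mul s t ihs iht =>
    have hs (a : ℕ) := ihs (h.shift {a}) (z := 0) (n := a) rfl
    have ht (a b : ℕ) := iht ((h.shift {a}).shift {b}) (z := 0) (n := b) rfl
    simp [toSetForm, sat, eval, seqCons, hz, hs, ht, hR _ _ _]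
  | app1 f t iht =>
    have ht (a : ℕ) := iht (h.shift {a}) (z := 0) (n := a) rfl
    have hmem (a : ℕ) : (memPair 0 (z + 1) (e' f + 1)).sat R (seqCons {a} σ) ↔
        polyPair a n ∈ σ (e' f) := sat_memPair hR rfl hz
    simp [toSetForm, eval, ht, hmem, h.graph]
  | app2 F f =>
    simp [toSetForm, sat, eval, seqCons, hz, h.graph, SetRelations.typeTwo,
      sInf_eq_iff, eq_comm (a := 0)]

/-- The translation of formulas that corresponds to `T2Term.toSetForm`. -/
def T2Form.toSetForm : T2Form → (ℕ → ℕ) → (ℕ → ℕ) → SetForm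
  | .eq s t, e, e' => .exN (.conj (s.toSetForm (e · + 1) (e' · + 1) 0)
      (t.toSetForm (e · + 1) (e' · + 1) 0))
  | .lt s t, e, e' => .exN <| .conj (s.toSetForm (e · + 1) (e' · + 1) 0) <|
      .exN <| .conj (t.toSetForm (e · + 2) (e' · + 2) 0) (.lt 1 0)
  | .neg φ, e, e' => .neg (φ.toSetForm e e')
  | .disj φ ψ, e, e' => .disj (φ.toSetForm e e') (ψ.toSetForm e e')
  | .exN x φ, e, e' => .exN (φ.toSetForm (Function.update (e · + 1) x 0) (e' · + 1))
  | .allN x φ, e, e' => .allN (φ.toSetForm (Function.update (e · + 1) x 0) (e' · + 1))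
  | .exF x φ, e, e' => .exFun (φ.toSetForm (e · + 1) (Function.update (e' · + 1) x 0))
  | .allF x φ, e, e' => .allFun (φ.toSetForm (e · + 1) (Function.update (e' · + 1) x 0))

open SetForm in
lemma T2Form.sat_toSetForm {R : SetRelations} (hR : R.IsArithmetic) {φ : T2Form}
    {e e' v : ℕ → ℕ} {g : ℕ → ℕ → ℕ} {σ : ℕ → Set ℕ} (h : Represents σ e e' v g) :
    (φ.toSetForm e e').sat R σ ↔ φ.sat v g R.typeTwo := by
  induction φ generalizing e e' v g σ with
  | eq s t =>
    have hterm (t : T2Term) (n : ℕ) :=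
      T2Term.sat_toSetForm hR (t := t) (h.shift {n}) (z := 0) (n := n) rfl
    simp [toSetForm, sat, hterm, eq_comm]
  | lt s t =>
    have hs (n : ℕ) := T2Term.sat_toSetForm hR (t := s) (h.shift {n}) (z := 0) (n := n) rfl
    have ht (n m : ℕ) :=
      T2Term.sat_toSetForm hR (t := t) ((h.shift {n}).shift {m}) (z := 0) (n := m) rfl
    simp [toSetForm, SetForm.sat, sat, hs, ht, seqCons]
  | neg φ ih => simp only [toSetForm, SetForm.sat, sat, ih h]
  | disj φ ψ ihφ ihψ => simp only [toSetForm, SetForm.sat, sat, ihφ h, ihψ h]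
  | exN x φ ih => simp [toSetForm, sat, ih (h.updateNum _ _)]
  | allN x φ ih => simp [toSetForm, sat, ih (h.updateNum _ _)]
  | exF x φ ih => simp [toSetForm, sat, sat_exFun hR, ih (h.updateFun _ _)]
  | allF x φ ih => simp [toSetForm, sat, sat_allFun hR, ih (h.updateFun _ _)]

/-- The formula over sets expressing, for a number `0`, that the type-2 objects coded by the
relations satisfy `ψ`. -/
def T2Form.reduct (ψ : T2Form) : SetForm :=
  .conj .arithmetic <| .conj (.sing 0) <| .ex <| .conj (.isZeroGraph 0) <|
    ψ.toSetForm (fun _ => 1) (fun _ => 0)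

lemma T2Form.sat_reduct {ψ : T2Form} {R : SetRelations} {σ : ℕ → Set ℕ} {x : ℕ}
    (hx : x ∈ σ 0) : ψ.reduct.sat R σ ↔
      R.IsArithmetic ∧ σ 0 = {x} ∧ ψ.sat (fun _ => x) (fun _ _ => 0) R.typeTwo := by
  simp only [reduct, SetForm.sat_conj, SetForm.sat_arithmetic, SetForm.sat_sing, SetForm.sat]
  refine and_congr_right fun hR => ?_
  have hsing : (∃ n, σ 0 = {n}) ↔ σ 0 = {x} := by
    refine ⟨fun ⟨n, hn⟩ => ?_, fun h => ⟨x, h⟩⟩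
    obtain rfl : x = n := by simpa [hn] using hx
    exact hn
  rw [hsing]
  refine and_congr_right fun hx => ?_
  have hrep : SetForm.Represents (seqCons (graph fun _ => 0) σ) (fun _ => 1) (fun _ => 0)
      (fun _ => x) (fun _ _ => 0) := ⟨fun _ => hx, fun _ => rfl⟩
  simp [SetForm.sat_isZeroGraph hR, seqCons, T2Form.sat_toSetForm hR hrep]

/-! ### The reduction -/

namespace CTL

@[simp]
lemma freeVars_conj {AP : Type} (φ ψ : CTL AP) :
    (conj φ ψ).freeVars = φ.freeVars ∪ ψ.freeVars := rfl

@[simp]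
lemma freeVars_imp {AP : Type} (φ ψ : CTL AP) :
    (imp φ ψ).freeVars = φ.freeVars ∪ ψ.freeVars := rfl

@[simp]
lemma freeVars_iff {AP : Type} (φ ψ : CTL AP) :
    (iff φ ψ).freeVars = φ.freeVars ∪ ψ.freeVars := by
  simp [iff, Set.union_comm ψ.freeVars]

@[simp]
lemma freeVars_eventually (φ : CTL ℕ) : (eventually φ).freeVars = insert 0 φ.freeVars := by
  simp [eventually, taut, freeVars]

@[simp]
lemma freeVars_always (φ : CTL ℕ) : (always φ).freeVars = insert 0 φ.freeVars := by
  simp [always, freeVars]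

lemma freeVars_branching : branching.freeVars = ∅ := by
  simp [branching, splits, freeVars]

@[simp]
lemma freeVars_iterate_next {AP : Type} (φ : CTL AP) (n : ℕ) :
    (next^[n] φ).freeVars = φ.freeVars := by
  induction n with
  | zero => rfl
  | succ n ih => rw [Function.iterate_succ_apply', freeVars, ih]

lemma code_iterate_next (φ : CTL ℕ) (n : ℕ) : (next^[n] φ).code = (Nat.pair 3)^[n] φ.code := by
  have hnext : Function.Semiconj code next (Nat.pair 3) := fun _ => rfl
  exact hnext.iterate_right n φ

lemma sat_iterate_next {AP : Type} {S : TS AP} {φ : CTL AP} {n : ℕ} {As : ℕ → ℕ → S.V} {r : ℕ} :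
    (next^[n] φ).sat S As r ↔ φ.sat S (fun x i => As x (i + n)) r := by
  induction n generalizing As with
  | zero => rfl
  | succ n ih => simp [Function.iterate_succ_apply', sat, ih, add_assoc]

end CTL

lemma SetForm.freeVars_toCTL {φ : SetForm} {e : ℕ → ℕ} {d : ℕ} (he : ∀ i, e i < d) :
    (φ.toCTL e d).freeVars ⊆ Set.Iio d := by
  have hd : 0 < d := (he 0).pos
  induction φ generalizing e d with
  | ex _ ih =>
    refine fun y hy => lt_of_le_of_ne (Nat.lt_succ_iff.1 ?_) hy.2
    exact ih (seqCons_lt_succ he) d.succ_pos hy.1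
  | neg _ ih => exact ih he hd
  | disj _ _ ihφ ihψ => exact Set.union_subset (ihφ he hd) (ihψ he hd)
  | _ => simp [toCTL, CTL.freeVars, Set.insert_subset_iff, he, hd, (he _).le]

/-- The sentence to which the reduction for `ψ` maps `x`. -/
def T2Form.toCTL (ψ : T2Form) (x : ℕ) : CTL ℕ :=
  .ex 0 <| .conj (.conj .branching (ψ.reduct.toCTL (fun _ => 0) 1)) (CTL.next^[x + 1] (.atom 0 0))

namespace T2Form

lemma isSentence_toCTL (ψ : T2Form) (x : ℕ) : (ψ.toCTL x).IsSentence := by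
  refine ⟨?_, trivial⟩
  have hreduct := SetForm.freeVars_toCTL (φ := ψ.reduct) (fun _ => zero_lt_one)
  simpa [toCTL, CTL.freeVars, CTL.freeVars_branching, Set.sdiff_eq_empty, Set.subset_def]
    using hreduct

lemma computable_code_toCTL (ψ : T2Form) : Computable fun x => (ψ.toCTL x).code := by
  have hnext : Primrec fun x => (CTL.next^[x + 1] (.atom 0 0 : CTL ℕ)).code := by
    simp only [CTL.code_iterate_next]
    exact .nat_iterate .succ (.const _) (Primrec₂.natPair.comp₂ (.const 3) .right)
  have hpair (n : ℕ) {f : ℕ → ℕ} (hf : Primrec f) : Primrec fun x => Nat.pair n (f x) :=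
    Primrec₂.natPair.comp (.const n) hf
  exact (hpair _ (hpair _ (hpair _ (hpair _ (hpair _ (hpair _ hnext)))))).to_comp

lemma sat_toCTL {ψ : T2Form} {x : ℕ} {S : TS ℕ} {As : ℕ → ℕ → S.V} {r : ℕ} (hr : As r 0 = S.vI) :
    (ψ.toCTL x).sat S As r ↔ S.Branching ∧ S.rel.IsArithmetic ∧
      ψ.sat (fun _ => x) (fun _ _ => 0) S.rel.typeTwo := by
  have hreduct (hS : S.Branching) (ρ : ℕ → S.V) (hρ : ρ 0 = S.vI) :=
    SetForm.sat_toCTL hS.realizesSets (φ := ψ.reduct) (e := fun _ => 0) (d := 1)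
      (fun _ => zero_lt_one) (As := Function.update As 0 ρ) (r := 0) (by simpa using hρ)
  have hbranching (ρ : ℕ → S.V) (hρ : ρ 0 = S.vI) :=
    CTL.sat_branching (As := Function.update As 0 ρ) (r := 0) (by simpa using hρ)
  simp only [toCTL, CTL.sat, CTL.sat_conj, CTL.sat_iterate_next, hr]
  constructor
  · rintro ⟨ρ, -, hρ, ⟨hS, hψ⟩, hx⟩
    rw [hbranching ρ hρ] at hS
    rw [hreduct hS ρ hρ, sat_reduct (x := x) (by simpa [pathSet] using hx)] at hψ
    exact ⟨hS, hψ.1, hψ.2.2⟩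
  · rintro ⟨hS, hR, hψ⟩
    obtain ⟨ρ, hpath, hρ, hx⟩ := hS.realizesSets {x}
    have hmem : x ∈ pathSet S ρ := hx ▸ rfl
    refine ⟨ρ, hpath, hρ, ⟨(hbranching ρ hρ).2 hS, (hreduct hS ρ hρ).2 ?_⟩, ?_⟩
    · rw [sat_reduct (x := x) (by simpa using hmem)]
      exact ⟨hR, by simpa using hx, hψ⟩
    · simpa [pathSet] using hmem

lemma toCTL_satisfiable_iff {ψ : T2Form} {x : ℕ} : (∃ S : TS ℕ, CModels S (ψ.toCTL x)) ↔
    ∃ G : ℕ → (ℕ → ℕ) → ℕ, ψ.sat (fun _ => x) (fun _ _ => 0) G := by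
  constructor
  · rintro ⟨S, hS⟩
    obtain ⟨ρ, hpath, hρ⟩ := S.exists_isPath S.vI
    exact ⟨S.rel.typeTwo, ((sat_toCTL hρ).1 (hS ρ hpath hρ)).2.2⟩
  · rintro ⟨G, hG⟩
    let R := SetRelations.ofTypeTwo G
    refine ⟨R.system, fun ρ _ hρ => (sat_toCTL hρ).2 ⟨R.branching_system, ?_⟩⟩
    rw [SetRelations.rel_system, SetRelations.typeTwo_ofTypeTwo]
    exact ⟨SetRelations.isArithmetic_ofTypeTwo G, hG⟩

lemma code_toCTL_mem_ctlSatCodes {ψ : T2Form} {x : ℕ} : (ψ.toCTL x).code ∈ CTLSatCodes ↔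
    ∃ G : ℕ → (ℕ → ℕ) → ℕ, ψ.sat (fun _ => x) (fun _ _ => 0) G := by
  simp [CTLSatCodes, ← toCTL_satisfiable_iff, isSentence_toCTL]

end T2Form

theorem Sigma21.manyOneRed_ctlSatCodes {N : Set ℕ} (hN : Sigma21 N) :
    ManyOneRed N CTLSatCodes := by
  obtain ⟨ψ, hψ⟩ := hN
  exact ⟨fun x => (ψ.toCTL x).code, ψ.computable_code_toCTL, fun x =>
    (hψ x).trans T2Form.code_toCTL_mem_ctlSatCodes.symm⟩

/-- **HyperCTL* satisfiability is Σ²₁-complete**: the set of codes of satisfiable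
sentences is Σ²₁ and every Σ²₁ set many-one reduces to it via a total computable
function. -/
theorem hyperctl_sat_Sigma21_complete :
    Sigma21 CTLSatCodes ∧ ∀ N : Set ℕ, Sigma21 N → ManyOneRed N CTLSatCodes := by
  exact ⟨sigma21_ctlSatCodes, fun _ => Sigma21.manyOneRed_ctlSatCodes⟩
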